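/- Let Γ = PSL(2, ℤ[ω]). Call a subgroup Δ ≤ Γ good if there exists a subgroup Ω ≤ Δ, normal in Δ, such that: the index [Γ : Δ] is finite and at most 12, the index [Δ : Ω] equals 5, Δ admits a surjective homomorphism onto ℤ (i.e. b₁(Δ) ≥ 1), and Ω admits a surjective homomorphism onto ℤ⁵ (i.e. b₁(Ω) ≥ 5). Then any two good subgroups of Γ are conjugate in Γ; moreover every good subgroup Δ has index exactly 12 in Γ and abelianization isomorphic to ℤ × ℤ/5ℤ (this is the subgroup Γ_s, the fundamental group of the sister of the figure-eight knot complement). -/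

import Mathlib

/-- The Eisenstein integers `ℤ[ω]`, the ring of integers of `ℚ(ω)` with
`ω² + ω + 1 = 0`. -/
abbrev Eisenstein : Type := NumberField.RingOfIntegers (CyclotomicField 3 ℚ)

/-- `PSL(2,R)`: the quotient of `SL(2,R)` by its center. -/
abbrev PSL2 (R : Type*) [CommRing R] : Type _ :=
  Matrix.SpecialLinearGroup (Fin 2) R ⧸
    Subgroup.center (Matrix.SpecialLinearGroup (Fin 2) R)

/-- Two subgroups are conjugate. -/
def SubgroupConj (G : Type*) [Group G] (H K : Subgroup G) : Prop :=
  ∃ g : G, Subgroup.map (MulAut.conj g).toMonoidHom H = K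

/-- A subgroup `Δ ≤ Γ = PSL(2, ℤ[ω])` is *good* if it has finite index at most
`12`, surjects onto `ℤ` (i.e. `b₁(Δ) ≥ 1`), and has a normal subgroup `Ω` of
index `5` surjecting onto `ℤ⁵` (i.e. `b₁(Ω) ≥ 5`). -/
def GoodSubgroup (Δ : Subgroup (PSL2 Eisenstein)) : Prop :=
  Δ.FiniteIndex ∧ Δ.index ≤ 12 ∧
    (∃ f : Δ →* Multiplicative ℤ, Function.Surjective f) ∧
    ∃ Ω : Subgroup Δ, Ω.Normal ∧ Ω.index = 5 ∧
      ∃ g : Ω →* (Fin 5 → Multiplicative ℤ), Function.Surjective g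

namespace GS

/-- A model of `A₄`: `(i, none)` is `cⁱ`, `(i, some j)` is `cⁱ a cʲ`. -/
def A4 : Type := Fin 3 × Option (Fin 3)

instance : DecidableEq A4 := inferInstanceAs (DecidableEq (Fin 3 × Option (Fin 3)))
instance : Fintype A4 := inferInstanceAs (Fintype (Fin 3 × Option (Fin 3)))

def A4.mul : A4 → A4 → A4
  | (i, none), (k, o) => (i + k, o)
  | (i, some j), (k, none) => (i, some (j + k))
  | (i, some j), (k, some l) =>
      if j + k = 0 then (i + l, none) else (i - (j + k), some (l - (j + k)))

def A4.inv : A4 → A4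
  | (i, none) => (-i, none)
  | (i, some j) => (-j, some (-i))

instance : Mul A4 := ⟨A4.mul⟩
instance : One A4 := ⟨((0 : Fin 3), none)⟩
instance : Inv A4 := ⟨A4.inv⟩

instance : Group A4 :=
  Group.ofLeftAxioms (by decide +kernel) (by decide +kernel) (by decide +kernel)

def A4.c (i : Fin 3) : A4 := (i, none)
def A4.a : A4 := ((0 : Fin 3), some 0)
def A4.m (i j : Fin 3) : A4 := (i, some j)

theorem A4.m_mul_pos {i j k l : Fin 3} (h : j + k = 0) : A4.m i j * A4.m k l = A4.c (i + l) :=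
  if_pos h

theorem A4.m_mul_neg {i j k l : Fin 3} (h : ¬ j + k = 0) :
    A4.m i j * A4.m k l = A4.m (i - (j + k)) (l - (j + k)) :=
  if_neg h

theorem A4.class_cases : ∀ p : A4, p = 1 ∨ (p ≠ 1 ∧ p * p = 1 ∧ ∃ q : A4, p = q * A4.a * q⁻¹) ∨
    (p ≠ 1 ∧ p * p ≠ 1 ∧ ∃ q : A4, p = q * A4.c 1 * q⁻¹ ∨ p⁻¹ = q * A4.c 1 * q⁻¹) := by decide +kernel

theorem A4.sum_class (n α τ : ℕ) :
    (∑ p : A4, if p = 1 then n else if p * p = 1 then α else τ) = n + 3 * α + 8 * τ := by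
  have h1 : (Finset.univ.filter fun p : A4 => p = 1).card = 1 := by decide +kernel
  have h2 : ((Finset.univ.filter fun p : A4 => ¬ p = 1).filter fun p => p * p = 1).card = 3 := by
    decide +kernel
  have h3 : ((Finset.univ.filter fun p : A4 => ¬ p = 1).filter fun p => ¬ p * p = 1).card = 8 := by
    decide +kernel
  rw [Finset.sum_ite, Finset.sum_ite, Finset.sum_const, Finset.sum_const, Finset.sum_const, h1, h2, h3]
  simp; ring

section words
variable {G : Type*} [Group G]

theorem cz_add {c : G} (hc : c ^ 3 = 1) (i j : Fin 3) :
    c ^ ((i + j : Fin 3) : ℕ) = c ^ (i : ℕ) * c ^ (j : ℕ) := by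
  rw [← pow_add, Fin.val_add, ← pow_eq_pow_mod _ hc]

theorem a_cz_a {a c : G} (ha : a * a = 1) (hc : c ^ 3 = 1) (hac : (a * c) ^ 3 = 1) (m : Fin 3)
    (hm : m ≠ 0) :
    a * c ^ (m : ℕ) * a = c ^ ((0 - m : Fin 3) : ℕ) * a * c ^ ((0 - m : Fin 3) : ℕ) := by
  have hai : a⁻¹ = a := inv_eq_of_mul_eq_one_left ha
  have hci : c⁻¹ = c ^ 2 := inv_eq_of_mul_eq_one_left (by rw [← hc]; simp only [pow_succ, pow_zero, one_mul, mul_assoc])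
  have h1 : a * c * a = c ^ 2 * a * c ^ 2 := by
    have : a * c * a * (c * a * c) = 1 := by rw [← hac]; simp only [pow_succ, pow_zero, one_mul, mul_assoc]
    have := eq_inv_of_mul_eq_one_left this
    rw [this]; simp [hai, hci, mul_assoc]
  have h2 : a * c ^ 2 * a = c * a * c := by
    have := congrArg (fun g => g⁻¹) h1
    have hci2 : (c ^ 2)⁻¹ = c := by rw [← hci, inv_inv]
    simp only [mul_inv_rev, hai, hci, hci2] at this
    simpa [mul_assoc] using this
  fin_cases m
  · exact absurd rfl hm
  · simpa using h1
  · exact (by simpa using h2 : a * c ^ 2 * a = c ^ 1 * a * c ^ 1)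

/-- the word map -/
def w (a c : G) : A4 → G
  | (i, none) => c ^ (i : ℕ)
  | (i, some j) => c ^ (i : ℕ) * a * c ^ (j : ℕ)

theorem w_mul {a c : G} (ha : a * a = 1) (hc : c ^ 3 = 1) (hac : (a * c) ^ 3 = 1) (p q : A4) :
    w a c (p * q) = w a c p * w a c q := by
  obtain ⟨i, _ | j⟩ := p <;> obtain ⟨k, _ | l⟩ := q
  · exact cz_add hc i k
  · change c ^ ((i + k : Fin 3) : ℕ) * a * _ = c ^ (i : ℕ) * (c ^ (k : ℕ) * a * _)
    rw [cz_add hc]; simp only [mul_assoc]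
  · change _ * a * c ^ ((j + k : Fin 3) : ℕ) = c ^ (i : ℕ) * a * c ^ (j : ℕ) * c ^ (k : ℕ)
    rw [cz_add hc]; simp only [mul_assoc]
  · change w a c (A4.m i j * A4.m k l) =
      c ^ (i : ℕ) * a * c ^ (j : ℕ) * (c ^ (k : ℕ) * a * c ^ (l : ℕ))
    have e : c ^ (i : ℕ) * a * c ^ (j : ℕ) * (c ^ (k : ℕ) * a * c ^ (l : ℕ)) =
        c ^ (i : ℕ) * (a * c ^ ((j + k : Fin 3) : ℕ) * a) * c ^ (l : ℕ) := by
      rw [cz_add hc]; simp only [mul_assoc]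
    rw [e]
    by_cases h : j + k = 0
    · rw [A4.m_mul_pos h]
      change c ^ ((i + l : Fin 3) : ℕ) = _
      rw [h, cz_add hc]; simp [ha]
    · rw [A4.m_mul_neg h]
      change c ^ ((i - (j + k) : Fin 3) : ℕ) * a * c ^ ((l - (j + k) : Fin 3) : ℕ) = _
      rw [a_cz_a ha hc hac _ h]
      have e1 : i - (j + k) = i + (0 - (j + k)) := by simp [sub_eq_add_neg]
      have e2 : l - (j + k) = (0 - (j + k)) + l := by simp [sub_eq_add_neg, add_comm]
      rw [e1, e2, cz_add hc, cz_add hc]; simp only [mul_assoc]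

def wHom {a c : G} (ha : a * a = 1) (hc : c ^ 3 = 1) (hac : (a * c) ^ 3 = 1) : A4 →* G :=
  MonoidHom.mk' (w a c) (w_mul ha hc hac)

def cHom {c : G} (hc : c ^ 3 = 1) : Multiplicative (Fin 3) →* G :=
  MonoidHom.mk' (fun i => c ^ ((Multiplicative.toAdd i : Fin 3) : ℕ)) (fun _ _ => cz_add hc _ _)

theorem map_w {H : Type*} [Group H] (θ : G →* H) (a c : G) (p : A4) :
    w (θ a) (θ c) p = θ (w a c p) := by
  obtain ⟨i, _ | j⟩ := p <;> simp [w]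

/-- generating triple -/
structure Tri (a b c : G) : Prop where
  a2 : a * a = 1
  b2 : b * b = 1
  c3 : c ^ 3 = 1
  ac : (a * c) ^ 3 = 1
  bc : (b * c) ^ 3 = 1
  ab : (a * b) ^ 3 = 1
  gen : Subgroup.closure {a, b, c} = ⊤

theorem Tri.map {H : Type*} [Group H] {a b c : G} (t : Tri a b c) (θ : G →* H)
    (hθ : Function.Surjective θ) : Tri (θ a) (θ b) (θ c) := by
  refine ⟨?_, ?_, ?_, ?_, ?_, ?_, ?_⟩
  · rw [← map_mul, t.a2, map_one]
  · rw [← map_mul, t.b2, map_one]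
  · rw [← map_pow, t.c3, map_one]
  · rw [← map_mul, ← map_pow, t.ac, map_one]
  · rw [← map_mul, ← map_pow, t.bc, map_one]
  · rw [← map_mul, ← map_pow, t.ab, map_one]
  · have : ({θ a, θ b, θ c} : Set H) = θ '' {a, b, c} := by
      simp [Set.image_insert_eq]
    rw [this, ← MonoidHom.map_closure, t.gen, Subgroup.map_top_of_surjective _ hθ]

end words


section orbits
variable {G : Type*} [Group G] {P : Type*} [Group P]

/-- orbit relation through a homomorphism -/
def oRel (f : P →* G) (X : Type*) [MulAction G X] : Setoid X where
  r x y := ∃ p, f p • x = y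
  iseqv := ⟨fun x => ⟨1, by simp⟩, fun {x y} ⟨p, h⟩ => ⟨p⁻¹, by simp [← h]⟩,
    fun {x y z} ⟨p, h⟩ ⟨q, k⟩ => ⟨q * p, by rw [map_mul, mul_smul, h, k]⟩⟩

theorem burnside [Fintype P] (f : P →* G) (X : Type*) [MulAction G X] [Finite X] :
    Fintype.card P * Nat.card (Quotient (oRel f X)) =
      ∑ p : P, Nat.card (MulAction.fixedBy X (f p)) := by
  classical
  let : MulAction P X := MulAction.compHom X f
  have hs : oRel f X = MulAction.orbitRel P X := by
    ext x y
    rw [MulAction.orbitRel_apply]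
    constructor
    · rintro ⟨p, h⟩
      exact ⟨p⁻¹, by rw [← h]; change f p⁻¹ • f p • x = x; simp⟩
    · rintro ⟨p, h⟩
      exact ⟨p⁻¹, by rw [← h]; change f p⁻¹ • f p • y = y; simp⟩
  rw [hs]
  have := Fintype.ofFinite X
  have : Fintype (MulAction.orbitRel.Quotient P X) := Fintype.ofFinite _
  have := MulAction.sum_card_fixedBy_eq_card_orbits_mul_card_group P X
  rw [mul_comm]
  simp only [← Nat.card_eq_fintype_card] at this ⊢
  exact this.symm

theorem card_fixed_conj (X : Type*) [MulAction G X] (g h : G) :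
    Nat.card (MulAction.fixedBy X (g * h * g⁻¹)) = Nat.card (MulAction.fixedBy X h) := by
  rw [← MulAction.smul_fixedBy]
  exact Set.ncard_image_of_injective _ (MulAction.injective g)

theorem card_fixed_inv (X : Type*) [MulAction G X] (h : G) :
    Nat.card (MulAction.fixedBy X h⁻¹) = Nat.card (MulAction.fixedBy X h) := by
  rw [MulAction.fixedBy_inv]

theorem burnside_A4 (f : A4 →* G) (X : Type*) [MulAction G X] [Finite X] :
    12 * Nat.card (Quotient (oRel f X)) = Nat.card X +
      3 * Nat.card (MulAction.fixedBy X (f A4.a)) + 8 * Nat.card (MulAction.fixedBy X (f (A4.c 1))) := by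
  have h := burnside f X
  rw [show Fintype.card A4 = 12 by decide +kernel] at h
  rw [h, ← A4.sum_class]
  refine Finset.sum_congr rfl fun p _ => ?_
  rcases A4.class_cases p with h1 | ⟨h1, h2, q, hq⟩ | ⟨h1, h2, q, hq | hq⟩
  · subst h1
    rw [if_pos rfl, map_one]
    have : MulAction.fixedBy X (1 : G) = Set.univ := by ext; simp
    rw [this]; exact Set.ncard_univ X
  · rw [if_neg h1, if_pos h2, hq, map_mul, map_mul, map_inv, card_fixed_conj]
  · rw [if_neg h1, if_neg h2, hq, map_mul, map_mul, map_inv, card_fixed_conj]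
  · rw [if_neg h1, if_neg h2, ← card_fixed_inv, ← map_inv, hq, map_mul, map_mul, map_inv,
      card_fixed_conj]

theorem burnside_C {c : G} (hc : c ^ 3 = 1) (X : Type*) [MulAction G X] [Finite X] :
    3 * Nat.card (Quotient (oRel (cHom hc) X)) = Nat.card X +
      2 * Nat.card (MulAction.fixedBy X c) := by
  have h := burnside (cHom hc) X
  rw [show Fintype.card (Multiplicative (Fin 3)) = 3 by decide +kernel] at h
  rw [h]
  change ∑ p : Fin 3, Nat.card (MulAction.fixedBy X (c ^ (p : ℕ))) = _
  rw [Fin.sum_univ_three]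
  have h2 : c ^ 2 = c⁻¹ := (inv_eq_of_mul_eq_one_left
    (by rw [← hc]; simp only [pow_succ, pow_zero, one_mul, mul_assoc])).symm
  have : MulAction.fixedBy X (1 : G) = Set.univ := by ext; simp
  have h0 : Nat.card (MulAction.fixedBy X (1 : G)) = Nat.card X := by
    rw [this]; exact Set.ncard_univ X
  simp only [Fin.val_zero, Fin.val_one, Fin.val_two, pow_zero, pow_one, h2, card_fixed_inv, h0]
  ring

end orbits

section rank
variable {G : Type*} [Group G] {P Q R : Type*} [Group P] [Group Q] [Group R]

theorem rank_bound [Fintype P] [Fintype Q] [Finite R] (fP : P →* G) (fQ : Q →* G) (fR : R →* G)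
    (hRP : ∀ r, ∃ p, fP p = fR r) (hRQ : ∀ r, ∃ q, fQ q = fR r)
    (hgen : ∀ S : Subgroup G, (∀ p, fP p ∈ S) → (∀ q, fQ q ∈ S) → S = ⊤)
    (N : Subgroup G) [Finite (G ⧸ N)] {k : ℕ} (φ : N →* (Fin k → Multiplicative ℤ))
    (hφ : Function.Surjective φ) :
    k + Nat.card (Quotient (oRel fP (G ⧸ N))) + Nat.card (Quotient (oRel fQ (G ⧸ N))) ≤
      Nat.card (Quotient (oRel fR (G ⧸ N))) + 1 := by
  classical
  let χ (i : Fin k) (n : N) : ℚ := ((Multiplicative.toAdd (φ n i) : ℤ) : ℚ)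
  have χmul : ∀ i m n, χ i (m * n) = χ i m + χ i n := by
    intro i m n; simp [χ, map_mul]
  have hmem : ∀ g : G, ((QuotientGroup.mk g : G ⧸ N).out)⁻¹ * g ∈ N := fun g => by
    rw [← QuotientGroup.eq, QuotientGroup.out_eq']
  let F (i : Fin k) (g : G) : ℚ := χ i ⟨_, hmem g⟩
  have Fmul : ∀ i g (n : N), F i (g * n) = F i g + χ i n := by
    intro i g n
    rw [← χmul]
    refine congrArg (χ i) (Subtype.ext ?_)
    have : (QuotientGroup.mk (g * n) : G ⧸ N) = QuotientGroup.mk g := by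
      rw [QuotientGroup.eq]; simp
    simp [this, mul_assoc]
  let FP (i : Fin k) (g : G) : ℚ := (∑ p : P, F i (fP p * g)) / Fintype.card P
  let FQ (i : Fin k) (g : G) : ℚ := (∑ p : Q, F i (fQ p * g)) / Fintype.card Q
  have hP0 : (Fintype.card P : ℚ) ≠ 0 := by simp
  have hQ0 : (Fintype.card Q : ℚ) ≠ 0 := by simp
  have FPmul : ∀ i g (n : N), FP i (g * n) = FP i g + χ i n := by
    intro i g n
    simp only [FP, ← mul_assoc, Fmul, Finset.sum_add_distrib]
    simp; field_simp
  have FQmul : ∀ i g (n : N), FQ i (g * n) = FQ i g + χ i n := by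
    intro i g n
    simp only [FQ, ← mul_assoc, Fmul, Finset.sum_add_distrib]
    simp; field_simp
  have FPinv : ∀ i g p, FP i (fP p * g) = FP i g := by
    intro i g p
    simp only [FP, ← mul_assoc, ← map_mul]
    congr 1
    exact Fintype.sum_equiv (Equiv.mulRight p) _ _ (fun x => by simp)
  have FQinv : ∀ i g p, FQ i (fQ p * g) = FQ i g := by
    intro i g p
    simp only [FQ, ← mul_assoc, ← map_mul]
    congr 1
    exact Fintype.sum_equiv (Equiv.mulRight p) _ _ (fun x => by simp)
  let OP := Quotient (oRel fP (G ⧸ N))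
  let OQ := Quotient (oRel fQ (G ⧸ N))
  let OR := Quotient (oRel fR (G ⧸ N))
  let cP (g : G) : OP := Quotient.mk _ (QuotientGroup.mk g)
  let cQ (g : G) : OQ := Quotient.mk _ (QuotientGroup.mk g)
  let rep (o : OR) : G := (Quotient.out o).out
  have cPmul : ∀ g (n : N), cP (g * n) = cP g := by
    intro g n
    have : (QuotientGroup.mk (g * n) : G ⧸ N) = QuotientGroup.mk g := by
      rw [QuotientGroup.eq]; simp
    simp only [cP, this]
  have cQmul : ∀ g (n : N), cQ (g * n) = cQ g := by
    intro g n
    have : (QuotientGroup.mk (g * n) : G ⧸ N) = QuotientGroup.mk g := by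
      rw [QuotientGroup.eq]; simp
    simp only [cQ, this]
  have cPinv : ∀ g p, cP (fP p * g) = cP g := fun g p =>
    (Quotient.sound (s := oRel fP (G ⧸ N)) (a := QuotientGroup.mk g)
      (b := QuotientGroup.mk (fP p * g)) ⟨p, rfl⟩).symm
  have cQinv : ∀ g p, cQ (fQ p * g) = cQ g := fun g p =>
    (Quotient.sound (s := oRel fQ (G ⧸ N)) (a := QuotientGroup.mk g)
      (b := QuotientGroup.mk (fQ p * g)) ⟨p, rfl⟩).symm
  let HP (s : Fin k → ℚ) (u : OP → ℚ) (g : G) : ℚ := (∑ i, s i * FP i g) - u (cP g)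
  let HQ (s : Fin k → ℚ) (u : OQ → ℚ) (g : G) : ℚ := (∑ i, s i * FQ i g) - u (cQ g)
  have : Fintype OP := Fintype.ofFinite _
  have : Fintype OQ := Fintype.ofFinite _
  have : Fintype OR := Fintype.ofFinite _
  let L : ((Fin k → ℚ) × (OP → ℚ) × (OQ → ℚ)) →ₗ[ℚ] ((OR → ℚ) × ℚ) :=
    { toFun := fun z => (fun o => HP z.1 z.2.1 (rep o) - HQ z.1 z.2.2 (rep o), z.2.1 (cP 1))
      map_add' := by
        intro x y
        ext
        · simp [HP, HQ, add_mul, Finset.sum_add_distrib]; ring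
        · simp
      map_smul' := by
        intro r x
        ext
        · simp [HP, HQ, mul_assoc, ← Finset.mul_sum]; ring
        · simp }
  have hinj : Function.Injective L := by
    rw [← LinearMap.ker_eq_bot, LinearMap.ker_eq_bot']
    rintro ⟨s, u, v⟩ h
    have h1 : ∀ o, HP s u (rep o) = HQ s v (rep o) := fun o =>
      sub_eq_zero.mp (congrFun (congrArg Prod.fst h) o)
    have h2 : u (cP 1) = 0 := congrArg Prod.snd h
    have HPmul : ∀ g (n : N), HP s u (g * n) = HP s u g + ∑ i, s i * χ i n := by
      intro g n
      simp only [HP, FPmul, cPmul, mul_add, Finset.sum_add_distrib]; ring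
    have HQmul : ∀ g (n : N), HQ s v (g * n) = HQ s v g + ∑ i, s i * χ i n := by
      intro g n
      simp only [HQ, FQmul, cQmul, mul_add, Finset.sum_add_distrib]; ring
    have HPinv : ∀ g p, HP s u (fP p * g) = HP s u g := by
      intro g p; simp only [HP, FPinv, cPinv]
    have HQinv : ∀ g p, HQ s v (fQ p * g) = HQ s v g := by
      intro g p; simp only [HQ, FQinv, cQinv]
    have heq : ∀ g, HP s u g = HQ s v g := by
      intro g
      let o : OR := Quotient.mk _ (QuotientGroup.mk g)
      obtain ⟨r, hr⟩ : ∃ r, fR r • (QuotientGroup.mk g : G ⧸ N) = Quotient.out o :=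
        (oRel fR (G ⧸ N)).symm (Quotient.exact (Quotient.out_eq o))
      have hr' : (QuotientGroup.mk (fR r * g) : G ⧸ N) = QuotientGroup.mk (rep o) := by
        rw [show rep o = (Quotient.out o).out from rfl, QuotientGroup.out_eq', ← hr]; rfl
      rw [QuotientGroup.eq] at hr'
      have e : rep o = fR r * g * (⟨_, hr'⟩ : N) := (mul_inv_cancel_left _ _).symm
      have h3 := h1 o
      rw [e, HPmul, HQmul] at h3
      obtain ⟨p, hp⟩ := hRP r
      obtain ⟨q, hq⟩ := hRQ r
      have h4 := HPinv g p
      have h5 := HQinv g q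
      rw [hp] at h4; rw [hq] at h5
      linarith
    have hall : ∀ x g, HP s u (x * g) = HP s u g := by
      let S : Subgroup G :=
        { carrier := {x | ∀ g, HP s u (x * g) = HP s u g}
          one_mem' := by intro g; simp
          mul_mem' := by intro x y hx hy g; rw [mul_assoc, hx, hy]
          inv_mem' := by intro x hx g; rw [← hx]; simp }
      have hS : S = ⊤ := hgen S (fun p g => HPinv g p)
        (fun q g => by rw [heq, HQinv, ← heq])
      intro x
      have : x ∈ S := hS ▸ Subgroup.mem_top x
      exact this
    have hsum : ∀ n : N, ∑ i, s i * χ i n = 0 := by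
      intro n
      have a1 := HPmul 1 n
      have a2 := hall n 1
      rw [mul_one] at a2; rw [one_mul] at a1
      linarith
    have hs : s = 0 := by
      funext i
      obtain ⟨n, hn⟩ := hφ (fun j => Multiplicative.ofAdd (if j = i then 1 else 0))
      have := hsum n
      simpa [χ, hn] using this
    subst hs
    have hu : ∀ g, u (cP g) = 0 := by
      intro g
      have := hall g 1
      simp [HP, h2] at this
      exact this
    have hv : ∀ g, v (cQ g) = 0 := by
      intro g
      have := heq g
      simp [HP, HQ, hu] at this
      exact this
    refine Prod.ext rfl (Prod.ext ?_ ?_)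
    · funext o
      induction o using Quotient.inductionOn with | _ y =>
      induction y using QuotientGroup.induction_on with | _ g => exact hu g
    · funext o
      induction o using Quotient.inductionOn with | _ y =>
      induction y using QuotientGroup.induction_on with | _ g => exact hv g
  have := LinearMap.finrank_le_finrank_of_injective hinj
  simp only [Module.finrank_prod, Module.finrank_fintype_fun_eq_card, Fintype.card_fin,
    Module.finrank_self] at this
  simp only [Nat.card_eq_fintype_card]
  change k + Fintype.card OP + Fintype.card OQ ≤ Fintype.card OR + 1
  omega

end rank


section count
variable {G : Type*} [Group G]

/-- the goodness condition, abstractly -/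
def Good (Δ : Subgroup G) : Prop :=
  Δ.FiniteIndex ∧ Δ.index ≤ 12 ∧
    (∃ f : Δ →* Multiplicative ℤ, Function.Surjective f) ∧
    ∃ Ω : Subgroup Δ, Ω.Normal ∧ Ω.index = 5 ∧
      ∃ g : Ω →* (Fin 5 → Multiplicative ℤ), Function.Surjective g

theorem mem_of_pow12 {D : Type*} [Group D] (N : Subgroup D) [N.Normal] (h5 : N.index = 5) (d : D)
    (hd : d ^ 12 = 1) : d ∈ N := by
  have h1 : d ^ 5 ∈ N := by
    have := N.pow_index_mem d
    rwa [h5] at this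
  have h2 : d = (d ^ 5) ^ 5 * (d ^ 12)⁻¹ * (d ^ 12)⁻¹ := by
    group
  rw [h2, hd]
  simpa using N.pow_mem h1 5

theorem fixed_cover (Δ : Subgroup G) (Ω : Subgroup Δ) [Ω.Normal] (h5 : Ω.index = 5)
    (g : G) (hg : g ^ 12 = 1) :
    Nat.card (MulAction.fixedBy (G ⧸ Ω.map Δ.subtype) g) =
      5 * Nat.card (MulAction.fixedBy (G ⧸ Δ) g) := by
  have hle : Ω.map Δ.subtype ≤ Δ := Subgroup.map_subtype_le Ω
  have hsub : (Ω.map Δ.subtype).subgroupOf Δ = Ω :=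
    Subgroup.comap_map_eq_self_of_injective Δ.subtype_injective Ω
  let e := Subgroup.quotientEquivProdOfLE hle
  have he : ∀ x : G, (e (QuotientGroup.mk x)).1 = QuotientGroup.mk x := fun x => rfl
  have key : ∀ y : G ⧸ Ω.map Δ.subtype,
      y ∈ MulAction.fixedBy (G ⧸ Ω.map Δ.subtype) g ↔
        (e y).1 ∈ MulAction.fixedBy (G ⧸ Δ) g := by
    intro y
    induction y using QuotientGroup.induction_on with | _ x =>
    rw [he, MulAction.mem_fixedBy, MulAction.mem_fixedBy]
    change (QuotientGroup.mk (g * x) : G ⧸ Ω.map Δ.subtype) = _ ↔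
      (QuotientGroup.mk (g * x) : G ⧸ Δ) = _
    rw [QuotientGroup.eq, QuotientGroup.eq]
    constructor
    · intro h; exact hle h
    · intro h
      refine ⟨⟨_, h⟩, ?_, rfl⟩
      apply mem_of_pow12 Ω h5
      apply Subtype.ext
      have : (g * x)⁻¹ * x = x⁻¹ * g⁻¹ * x⁻¹⁻¹ := by group
      simp only [Subgroup.coe_pow, Subgroup.coe_one, this, conj_pow, inv_pow, hg]
      simp
  have e2 : MulAction.fixedBy (G ⧸ Ω.map Δ.subtype) g ≃
      (MulAction.fixedBy (G ⧸ Δ) g) × (Δ ⧸ (Ω.map Δ.subtype).subgroupOf Δ) :=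
    { toFun := fun y => (⟨(e y).1, (key y).1 y.2⟩, (e y).2)
      invFun := fun z => ⟨e.symm (z.1, z.2), (key _).2 (by simp)⟩
      left_inv := fun y => by simp
      right_inv := fun z => by simp }
  rw [Nat.card_congr e2, Nat.card_prod, hsub, mul_comm, ← h5]; rfl

theorem fixedBy_card_one (X : Type*) [MulAction G X] :
    Nat.card (MulAction.fixedBy X (1 : G)) = Nat.card X := by
  have : MulAction.fixedBy X (1 : G) = Set.univ := by ext; simp
  rw [this]; exact Set.ncard_univ X

theorem Tri.conj_ab {a b c : G} (t : Tri a b c) : b = (a * b) * a * (a * b)⁻¹ := by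
  have h := t.ab
  have ha : a⁻¹ = a := inv_eq_of_mul_eq_one_left t.a2
  have hb : b⁻¹ = b := inv_eq_of_mul_eq_one_left t.b2
  have : (a * b * a) * (b * a * b) = 1 := by
    rw [← h]; simp only [pow_succ, pow_zero, one_mul, mul_assoc]
  have h2 := eq_inv_of_mul_eq_one_left this
  rw [h2]; simp [ha, hb, mul_assoc]
  rw [← mul_assoc b b, t.b2, one_mul, t.a2]

theorem count_stage {a b c : G} (t : Tri a b c) (Δ : Subgroup G) (h : Good Δ) :
    Δ.index = 12 ∧ (∀ x : G ⧸ Δ, a • x ≠ x) ∧ (∀ x : G ⧸ Δ, b • x ≠ x) ∧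
      (∀ x : G ⧸ Δ, c • x ≠ x) := by
  obtain ⟨hfin, hle, -, Ω, hnor, h5, φ, hφ⟩ := h
  let N := Ω.map Δ.subtype
  have hNidx : N.index = 5 * Δ.index := by
    have h1 : N.relIndex Δ = 5 := by
      rw [Subgroup.relIndex, Subgroup.subgroupOf, Subgroup.comap_map_eq_self_of_injective Δ.subtype_injective, h5]
    rw [← h1]
    exact (Subgroup.relIndex_mul_index (Subgroup.map_subtype_le Ω)).symm
  have hD0 : Δ.index ≠ 0 := hfin.index_ne_zero
  have : Finite (G ⧸ Δ) := inferInstance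
  have hNf : N.FiniteIndex := ⟨by rw [hNidx]; omega⟩
  have : Finite (G ⧸ N) := inferInstance
  let fA := wHom t.a2 t.c3 t.ac
  let fB := wHom t.b2 t.c3 t.bc
  let fC := cHom t.c3
  have fAa : fA A4.a = a := by change c ^ 0 * a * c ^ 0 = a; simp
  have fBa : fB A4.a = b := by change c ^ 0 * b * c ^ 0 = b; simp
  have fAc : fA (A4.c 1) = c := by change c ^ 1 = c; simp
  have fBc : fB (A4.c 1) = c := by change c ^ 1 = c; simp
  let e : N ≃* Ω := (Ω.equivMapOfInjective Δ.subtype Δ.subtype_injective).symm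
  have hrk := rank_bound fA fB fC (fun r => ⟨A4.c (Multiplicative.toAdd r), rfl⟩)
    (fun r => ⟨A4.c (Multiplicative.toAdd r), rfl⟩)
    (by
      intro S h1 h2
      rw [eq_top_iff, ← t.gen, Subgroup.closure_le]
      rintro x (rfl | rfl | rfl)
      · rw [← fAa]; exact h1 _
      · rw [← fBa]; exact h2 _
      · exact fAc ▸ h1 (A4.c 1)) N (φ.comp e.toMonoidHom) (hφ.comp e.surjective)
  have a12 : a ^ 12 = 1 := by
    rw [show 12 = 2 * 6 by norm_num, pow_mul, pow_two, t.a2, one_pow]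
  have b12 : b ^ 12 = 1 := by
    rw [show 12 = 2 * 6 by norm_num, pow_mul, pow_two, t.b2, one_pow]
  have c12 : c ^ 12 = 1 := by
    rw [show 12 = 3 * 4 by norm_num, pow_mul, t.c3, one_pow]
  have u1 := burnside_A4 fA (G ⧸ N)
  have u2 := burnside_A4 fB (G ⧸ N)
  have u3 := burnside_C t.c3 (G ⧸ N)
  have v1 := burnside_A4 fA (G ⧸ Δ)
  have v3 := burnside_C t.c3 (G ⧸ Δ)
  have hba : Nat.card (MulAction.fixedBy (G ⧸ Δ) b) = Nat.card (MulAction.fixedBy (G ⧸ Δ) a) := by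
    conv_lhs => rw [t.conj_ab]
    exact card_fixed_conj _ _ _
  rw [fAa, fAc, fixed_cover Δ Ω h5 a a12, fixed_cover Δ Ω h5 c c12] at u1
  rw [fBa, fBc, fixed_cover Δ Ω h5 b b12, fixed_cover Δ Ω h5 c c12, hba] at u2
  rw [fixed_cover Δ Ω h5 c c12] at u3
  rw [fAa, fAc] at v1
  have n1 : Nat.card (G ⧸ N) = 5 * Δ.index := hNidx
  have n2 : Nat.card (G ⧸ Δ) = Δ.index := rfl
  change _ = Nat.card (G ⧸ N) + _ + _ at u1
  change _ = Nat.card (G ⧸ N) + _ + _ at u2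
  change _ = Nat.card (G ⧸ N) + _ at u3
  change 12 * Nat.card (Quotient (oRel fA (G ⧸ N))) = _ at u1
  change 12 * Nat.card (Quotient (oRel fB (G ⧸ N))) = _ at u2
  change 3 * Nat.card (Quotient (oRel fC (G ⧸ N))) = _ at u3
  rw [n1] at u1 u2 u3
  rw [n2] at v1 v3
  generalize Nat.card (Quotient (oRel fA (G ⧸ N))) = oA at *
  generalize Nat.card (Quotient (oRel fB (G ⧸ N))) = oB at *
  generalize Nat.card (Quotient (oRel fC (G ⧸ N))) = oC at *
  generalize Nat.card (Quotient (oRel fA (G ⧸ Δ))) = qA at *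
  generalize Nat.card (Quotient (oRel (cHom t.c3) (G ⧸ Δ))) = qC at *
  have hcase : Δ.index = 12 ∧ Nat.card (MulAction.fixedBy (G ⧸ Δ) a) = 0 ∧
      Nat.card (MulAction.fixedBy (G ⧸ Δ) c) = 0 ∨
      Nat.card (MulAction.fixedBy (G ⧸ Δ) a) = 1 ∧
      Nat.card (MulAction.fixedBy (G ⧸ Δ) c) = 0 := by
    generalize Nat.card (MulAction.fixedBy (G ⧸ Δ) a) = α at *
    generalize Nat.card (MulAction.fixedBy (G ⧸ Δ) c) = τ at *
    generalize Δ.index = n at *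
    omega
  have hno : ∀ g : G, Nat.card (MulAction.fixedBy (G ⧸ Δ) g) = 0 → ∀ x : G ⧸ Δ, g • x ≠ x := by
    intro g hg x hx
    rw [Finite.card_eq_zero_iff] at hg
    exact hg.false ⟨x, hx⟩
  rcases hcase with ⟨h1, h2, h3⟩ | ⟨h1, h2⟩
  · exact ⟨h1, hno a h2, hno b (hba.trans h2), hno c h3⟩
  · exfalso
    rw [Nat.card_eq_one_iff_unique] at h1
    obtain ⟨hs, ⟨x, hx⟩⟩ := h1
    have hx : a • x = x := hx
    have huniq : ∀ y : G ⧸ Δ, a • y = y → y = x := fun y hy =>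
      congrArg Subtype.val (Subsingleton.elim (⟨y, hy⟩ : MulAction.fixedBy (G ⧸ Δ) a) ⟨x, hx⟩)
    let a' := fA (A4.c 1 * A4.a * (A4.c 1)⁻¹)
    have hcomm : a * a' = a' * a := by
      have : A4.a * (A4.c 1 * A4.a * (A4.c 1)⁻¹) = (A4.c 1 * A4.a * (A4.c 1)⁻¹) * A4.a := by
        decide +kernel
      have := congrArg fA this
      rwa [map_mul fA A4.a, map_mul fA _ A4.a, fAa] at this
    have ha' : a' = c * a * c⁻¹ := by
      simp only [a', map_mul, map_inv, fAa, fAc]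
    have h3 : a' • x = x := huniq _ (by rw [smul_smul, hcomm, ← smul_smul, hx])
    rw [ha', ← smul_smul, ← smul_smul] at h3
    have h4 : a • c⁻¹ • x = c⁻¹ • x := by
      conv_rhs => rw [← h3]
      rw [inv_smul_smul]
    have h5 := huniq _ h4
    exact hno c h2 x (by conv_lhs => rw [← h5, smul_inv_smul])

end count


section classify

def T (p0 p1 p2 q : A4) : A4 :=
  if q = A4.c 0 then p0 else if q = A4.c 1 then p1 else if q = A4.c 2 then p2
  else if q = p0 then A4.c 0 else if q = p1 then A4.c 1 else if q = p2 then A4.c 2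
  else if q = A4.c 1 * p0 then A4.c 2 * p2 else if q = A4.c 1 * p1 then A4.c 2 * p0
  else if q = A4.c 1 * p2 then A4.c 2 * p1
  else if q = A4.c 2 * p0 then A4.c 1 * p1 else if q = A4.c 2 * p1 then A4.c 1 * p2
  else A4.c 1 * p0

def IsRep (x y z : A4) : Prop :=
  (x = A4.m 0 0 ∧ y = A4.m 0 1 ∧ z = A4.m 0 2) ∨
  (x = A4.m 0 0 ∧ y = A4.m 0 1 ∧ z = A4.m 1 2) ∨
  (x = A4.m 0 0 ∧ y = A4.m 0 1 ∧ z = A4.m 2 2) ∨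
  (x = A4.m 1 1 ∧ y = A4.m 1 2 ∧ z = A4.m 2 0) ∨
  (x = A4.m 1 0 ∧ y = A4.m 0 2 ∧ z = A4.m 1 1)

instance (x y z : A4) : Decidable (IsRep x y z) := by unfold IsRep; infer_instance

theorem exhaust : ∀ k0 k1 k2 s0 s1 s2 : Fin 3, s0 ≠ s1 → s0 ≠ s2 → s1 ≠ s2 → ∀ q : A4,
    q = A4.c 0 ∨ q = A4.c 1 ∨ q = A4.c 2 ∨
    q = A4.m k0 s0 ∨ q = A4.m k1 s1 ∨ q = A4.m k2 s2 ∨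
    q = A4.c 1 * A4.m k0 s0 ∨ q = A4.c 1 * A4.m k1 s1 ∨ q = A4.c 1 * A4.m k2 s2 ∨
    q = A4.c 2 * A4.m k0 s0 ∨ q = A4.c 2 * A4.m k1 s1 ∨ q = A4.c 2 * A4.m k2 s2 := by
  decide +kernel

theorem classify : ∀ k0 k1 k2 s0 s1 s2 : Fin 3, s0 ≠ s1 → s0 ≠ s2 → s1 ≠ s2 →
    (∀ q : A4, A4.a * T (A4.m k0 s0) (A4.m k1 s1) (A4.m k2 s2)
      (A4.a * T (A4.m k0 s0) (A4.m k1 s1) (A4.m k2 s2)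
      (A4.a * T (A4.m k0 s0) (A4.m k1 s1) (A4.m k2 s2) q)) = q) →
    ∃ p : A4, IsRep (T (A4.m k0 s0) (A4.m k1 s1) (A4.m k2 s2) (A4.c 0 * p) * p⁻¹)
      (T (A4.m k0 s0) (A4.m k1 s1) (A4.m k2 s2) (A4.c 1 * p) * p⁻¹)
      (T (A4.m k0 s0) (A4.m k1 s1) (A4.m k2 s2) (A4.c 2 * p) * p⁻¹) := by
  decide +kernel

theorem A4.cases (p : A4) : (∃ i, p = A4.c i) ∨ ∃ i j, p = A4.m i j := by
  obtain ⟨i, _ | j⟩ := p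
  · exact Or.inl ⟨i, rfl⟩
  · exact Or.inr ⟨i, j, rfl⟩

variable {G : Type*} [Group G]

/-- Schreier-type element -/
def hw (a b c : G) (α : A4) (j : Fin 3) : G := (w a c α)⁻¹ * (b * c ^ (j : ℕ))

theorem map_hw {H : Type*} [Group H] (θ : G →* H) (a b c : G) (α : A4) (j : Fin 3) :
    hw (θ a) (θ b) (θ c) α j = θ (hw a b c α j) := by
  simp [hw, map_w]

theorem w_free {a c : G} (ha : a * a = 1) (hc : c ^ 3 = 1) (hac : (a * c) ^ 3 = 1)
    {X : Type*} [MulAction G X] (h1 : ∀ x : X, a • x ≠ x) (h2 : ∀ x : X, c • x ≠ x)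
    (p : A4) (x : X) (h : w a c p • x = x) : p = 1 := by
  have fa : wHom ha hc hac A4.a = a := by change c ^ 0 * a * c ^ 0 = a; simp
  have fc : wHom ha hc hac (A4.c 1) = c := by change c ^ 1 = c; simp
  have h : wHom ha hc hac p • x = x := h
  rcases A4.class_cases p with h0 | ⟨-, -, q, hq⟩ | ⟨-, -, q, hq | hq⟩
  · exact h0
  · rw [hq, map_mul, map_mul, map_inv, fa, ← smul_smul, ← smul_smul, smul_eq_iff_eq_inv_smul] at h
    exact absurd h (h1 _)
  · rw [hq, map_mul, map_mul, map_inv, fc, ← smul_smul, ← smul_smul, smul_eq_iff_eq_inv_smul] at h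
    exact absurd h (h2 _)
  · have h := (inv_smul_eq_iff.mpr h.symm)
    rw [← map_inv, hq, map_mul, map_mul, map_inv, fc, ← smul_smul, ← smul_smul,
      smul_eq_iff_eq_inv_smul] at h
    exact absurd h (h2 _)

theorem bcb {b c : G} (hb : b * b = 1) (hc : c ^ 3 = 1) (hbc : (b * c) ^ 3 = 1) :
    b * c * b = c ^ 2 * b * c ^ 2 := by
  simpa using a_cz_a hb hc hbc 1 (by decide)

theorem m_ne_one : ∀ i j : Fin 3, A4.m i j ≠ 1 := by decide +kernel

theorem m_eq_cac : ∀ i j : Fin 3, A4.m (-i) j = (A4.c i)⁻¹ * A4.a * A4.c j := by decide +kernel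

theorem cacj : ∀ i j j' : Fin 3, (A4.a * A4.c j')⁻¹ * (A4.c i * A4.a * A4.c j) = 1 → j = j' := by
  decide +kernel

theorem c_mul_m : ∀ u v y : Fin 3, A4.m u y = A4.c (u - v) * A4.m v y := by decide +kernel

theorem cA_mul : ∀ i j : Fin 3, A4.c i * A4.c j = A4.c (i + j) := fun _ _ => rfl

theorem T_eq (β : A4 → A4) (inv1 : ∀ q, β (β q) = q)
    (rel1 : ∀ q, β (A4.c 1 * β q) = A4.c 2 * β (A4.c 2 * q))
    (rel2 : ∀ q, β (A4.c 2 * β q) = A4.c 1 * β (A4.c 1 * q)) (p0 p1 p2 : A4)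
    (h0 : p0 = β (A4.c 0)) (h1 : p1 = β (A4.c 1)) (h2 : p2 = β (A4.c 2)) (q : A4)
    (hex : q = A4.c 0 ∨ q = A4.c 1 ∨ q = A4.c 2 ∨
      q = p0 ∨ q = p1 ∨ q = p2 ∨
      q = A4.c 1 * p0 ∨ q = A4.c 1 * p1 ∨ q = A4.c 1 * p2 ∨
      q = A4.c 2 * p0 ∨ q = A4.c 2 * p1 ∨ q = A4.c 2 * p2) :
    T p0 p1 p2 q = β q := by
  rw [h0, h1, h2] at hex ⊢
  unfold T
  by_cases g : q = A4.c 0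
  · rw [if_pos g, g]
  rw [if_neg g]
  replace hex := hex.resolve_left g
  clear g
  by_cases g : q = A4.c 1
  · rw [if_pos g, g]
  rw [if_neg g]
  replace hex := hex.resolve_left g
  clear g
  by_cases g : q = A4.c 2
  · rw [if_pos g, g]
  rw [if_neg g]
  replace hex := hex.resolve_left g
  clear g
  by_cases g : q = β (A4.c 0)
  · rw [if_pos g, g, inv1]
  rw [if_neg g]
  replace hex := hex.resolve_left g
  clear g
  by_cases g : q = β (A4.c 1)
  · rw [if_pos g, g, inv1]
  rw [if_neg g]
  replace hex := hex.resolve_left g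
  clear g
  by_cases g : q = β (A4.c 2)
  · rw [if_pos g, g, inv1]
  rw [if_neg g]
  replace hex := hex.resolve_left g
  clear g
  by_cases g : q = A4.c 1 * β (A4.c 0)
  · rw [if_pos g, g, rel1, cA_mul, show (2 + 0 : Fin 3) = 2 from rfl]
  rw [if_neg g]
  replace hex := hex.resolve_left g
  clear g
  by_cases g : q = A4.c 1 * β (A4.c 1)
  · rw [if_pos g, g, rel1, cA_mul, show (2 + 1 : Fin 3) = 0 from rfl]
  rw [if_neg g]
  replace hex := hex.resolve_left g
  clear g
  by_cases g : q = A4.c 1 * β (A4.c 2)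
  · rw [if_pos g, g, rel1, cA_mul, show (2 + 2 : Fin 3) = 1 from rfl]
  rw [if_neg g]
  replace hex := hex.resolve_left g
  clear g
  by_cases g : q = A4.c 2 * β (A4.c 0)
  · rw [if_pos g, g, rel2, cA_mul, show (1 + 0 : Fin 3) = 1 from rfl]
  rw [if_neg g]
  replace hex := hex.resolve_left g
  clear g
  by_cases g : q = A4.c 2 * β (A4.c 1)
  · rw [if_pos g, g, rel2, cA_mul, show (1 + 1 : Fin 3) = 2 from rfl]
  rw [if_neg g]
  replace hex := hex.resolve_left g
  clear g
  rw [hex, rel2, cA_mul, show (1 + 2 : Fin 3) = 0 from rfl]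

theorem key_stage {a b c : G} (t : Tri a b c) (Δ : Subgroup G) (h12 : Δ.index = 12)
    (ha : ∀ x : G ⧸ Δ, a • x ≠ x) (hb : ∀ x : G ⧸ Δ, b • x ≠ x) (hc : ∀ x : G ⧸ Δ, c • x ≠ x) :
    ∃ (g : G) (x y z : A4), IsRep x y z ∧
      g * hw a b c x 0 * g⁻¹ ∈ Δ ∧ g * hw a b c y 1 * g⁻¹ ∈ Δ ∧ g * hw a b c z 2 * g⁻¹ ∈ Δ := by
  classical
  let fA := wHom t.a2 t.c3 t.ac
  let fB := wHom t.b2 t.c3 t.bc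
  have : Finite (G ⧸ Δ) := Nat.finite_of_card_ne_zero (by
    change Δ.index ≠ 0; omega)
  let x0 : G ⧸ Δ := QuotientGroup.mk 1
  let e : A4 → G ⧸ Δ := fun q => fA q • x0
  have einj : Function.Injective e := by
    intro p q hpq
    have : fA (q⁻¹ * p) • x0 = x0 := by
      rw [map_mul, map_inv, ← smul_smul, inv_smul_eq_iff]; exact hpq
    have := w_free t.a2 t.c3 t.ac ha hc _ _ this
    exact (inv_mul_eq_one.mp this).symm
  have ebij : Function.Bijective e := by
    rw [Nat.bijective_iff_injective_and_card]
    refine ⟨einj, ?_⟩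
    rw [Nat.card_eq_fintype_card, show Fintype.card A4 = 12 by decide +kernel]
    exact h12.symm
  choose β hβ using fun q => ebij.2 (b • e q)
  have hA : ∀ p q, fA p • e q = e (p * q) := fun p q => by
    simp only [e, smul_smul, map_mul]
  have hci : ∀ (i : Fin 3) q, c ^ (i : ℕ) • e q = e (A4.c i * q) := fun i q => hA (A4.c i) q
  have fAa : fA A4.a = a := by change c ^ 0 * a * c ^ 0 = a; simp
  have haa : ∀ q, a • e q = e (A4.a * q) := fun q => by rw [← hA, fAa]
  have hc1 : ∀ q, c • e q = e (A4.c 1 * q) := fun q => by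
    rw [← hci]; simp
  have hc2 : ∀ q, c ^ 2 • e q = e (A4.c 2 * q) := fun q => by
    rw [← hci]; simp
  have inv1 : ∀ q, β (β q) = q := fun q => by
    apply einj
    rw [hβ, hβ, smul_smul, t.b2, one_smul]
  have rel1 : ∀ q, β (A4.c 1 * β q) = A4.c 2 * β (A4.c 2 * q) := fun q => by
    apply einj
    rw [hβ, ← hc1, hβ, ← hc2, hβ, ← hc2]
    generalize e q = v
    rw [smul_smul, smul_smul, smul_smul, smul_smul, bcb t.b2 t.c3 t.bc]
  have rel2 : ∀ q, β (A4.c 2 * β q) = A4.c 1 * β (A4.c 1 * q) := fun q => by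
    have := rel1 (A4.c 1 * q)
    rw [← mul_assoc, show A4.c 2 * A4.c 1 = 1 by decide +kernel, one_mul] at this
    have h2 := congrArg β this
    rw [inv1] at h2
    exact h2.symm
  have rel3 : ∀ q, A4.a * β (A4.a * β (A4.a * β q)) = q := fun q => by
    apply einj
    rw [← haa, hβ, ← haa, hβ, ← haa, hβ]
    simp only [smul_smul]
    have : a * b * a * b * a * b = 1 := by
      rw [← t.ab]; simp only [pow_succ, pow_zero, one_mul, mul_assoc]
    simp only [← mul_assoc, this, one_smul]
  have bfree : ∀ (i : Fin 3) (j : Fin 3), β (A4.c j) ≠ A4.c i := by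
    intro i j hij
    have h1 := hβ (A4.c j)
    rw [hij] at h1
    have h2 : fB (A4.m (-i) j) • x0 = x0 := by
      rw [m_eq_cac, map_mul, map_mul, map_inv, mul_assoc, ← smul_smul, inv_smul_eq_iff, ← smul_smul]
      have fBa : fB A4.a = b := by change c ^ 0 * b * c ^ 0 = b; simp
      rw [fBa]; exact h1.symm
    exact m_ne_one _ _ (w_free t.b2 t.c3 t.bc hb hc (A4.m (-i) j) x0 h2)
  have bdist : ∀ (i j j' : Fin 3), β (A4.c j') = A4.c i * β (A4.c j) → j = j' := by
    intro i j j' hij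
    have h1 := hβ (A4.c j')
    rw [hij, ← hci, hβ] at h1
    have fBa : fB A4.a = b := by change c ^ 0 * b * c ^ 0 = b; simp
    have h2 : fB ((A4.a * A4.c j')⁻¹ * (A4.c i * A4.a * A4.c j)) • x0 = x0 := by
      rw [map_mul, map_inv, ← smul_smul, inv_smul_eq_iff, map_mul, map_mul, map_mul, fBa,
        ← smul_smul, ← smul_smul, ← smul_smul]
      exact h1
    exact cacj _ _ _ (w_free t.b2 t.c3 t.bc hb hc _ x0 h2)
  have getm : ∀ j, ∃ k s, β (A4.c j) = A4.m k s := fun j => by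
    rcases A4.cases (β (A4.c j)) with ⟨i, hi⟩ | h
    · exact absurd hi (bfree i j)
    · exact h
  choose k s hks using getm
  have sdist : ∀ j j', j ≠ j' → s j ≠ s j' := by
    intro j j' hj hs
    refine hj (bdist (k j' - k j) j j' ?_)
    rw [hks, hks, hs]
    exact c_mul_m _ _ _
  have hT : ∀ q, T (A4.m (k 0) (s 0)) (A4.m (k 1) (s 1)) (A4.m (k 2) (s 2)) q = β q := by
    intro q
    exact T_eq β inv1 rel1 rel2 _ _ _ (hks 0).symm (hks 1).symm (hks 2).symm q
      (exhaust (k 0) (k 1) (k 2) (s 0) (s 1) (s 2) (sdist 0 1 (by decide))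
      (sdist 0 2 (by decide)) (sdist 1 2 (by decide)) q)
  obtain ⟨p, hp⟩ := classify (k 0) (k 1) (k 2) (s 0) (s 1) (s 2) (sdist 0 1 (by decide))
      (sdist 0 2 (by decide)) (sdist 1 2 (by decide)) (by
        simp only [hT]; exact rel3)
  simp only [hT] at hp
  refine ⟨(fA p)⁻¹, _, _, _, hp, ?_⟩
  have fin : ∀ j : Fin 3, (fA p)⁻¹ * hw a b c (β (A4.c j * p) * p⁻¹) j * (fA p)⁻¹⁻¹ ∈ Δ := by
    intro j
    have h1 := hβ (A4.c j * p)
    have h2 : fA (β (A4.c j * p)) • x0 = (b * (c ^ (j : ℕ) * fA p)) • x0 := by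
      rw [← smul_smul, ← smul_smul]
      change e _ = b • c ^ (j : ℕ) • e p
      rw [h1, hci]
    have h3 : (QuotientGroup.mk (fA (β (A4.c j * p))) : G ⧸ Δ) =
        QuotientGroup.mk (b * (c ^ (j : ℕ) * fA p)) := by
      have := h2
      change (QuotientGroup.mk (_ * 1) : G ⧸ Δ) = QuotientGroup.mk (_ * 1) at this
      rwa [mul_one, mul_one] at this
    rw [QuotientGroup.eq] at h3
    have h4 : hw a b c (β (A4.c j * p) * p⁻¹) j =
        (fA (β (A4.c j * p)) * (fA p)⁻¹)⁻¹ * (b * c ^ (j : ℕ)) := by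
      rw [← map_inv, ← map_mul]; rfl
    rw [h4]
    convert h3 using 1
    group
  exact ⟨fin 0, fin 1, fin 2⟩

end classify

section gen
variable {G : Type*} [Group G]

theorem w_c (a c : G) (i : Fin 3) : w a c (A4.c i) = c ^ (i : ℕ) := rfl

theorem w_a (a c : G) : w a c A4.a = a := by change c ^ 0 * a * c ^ 0 = a; simp

theorem s0 (a b c : G) (α : Fin 3 → A4) (j : Fin 3) :
    b * w a c (A4.c j) = w a c (α j) * hw a b c (α j) j := by
  rw [w_c, hw, mul_inv_cancel_left]

theorem s1 {a b c : G} (t : Tri a b c) (α : Fin 3 → A4) (j : Fin 3) :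
    b * w a c (α j) = w a c (A4.c j) * (hw a b c (α j) j)⁻¹ := by
  rw [eq_mul_inv_iff_mul_eq, mul_assoc, ← s0 a b c α j, ← mul_assoc, t.b2, one_mul]

theorem bc2b {b c : G} (hb : b * b = 1) (hc : c ^ 3 = 1) (hbc : (b * c) ^ 3 = 1) :
    b * c ^ 2 * b = c ^ 1 * b * c ^ 1 := by
  have := a_cz_a hb hc hbc 2 (by decide)
  exact this

theorem s2 {a b c : G} (t : Tri a b c) (α : Fin 3 → A4) (j : Fin 3) :
    b * w a c (A4.c 1 * α j) = w a c (A4.c 2 * α (j + 2)) *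
      (hw a b c (α (j + 2)) (j + 2) * (hw a b c (α j) j)⁻¹) := by
  rw [w_mul t.a2 t.c3 t.ac, w_mul t.a2 t.c3 t.ac, ← mul_assoc (_ * _) (hw a b c _ _), mul_assoc (w a c _),
    ← s0 a b c α, eq_mul_inv_iff_mul_eq, mul_assoc, mul_assoc, ← s0 a b c α,
    w_c, w_c, w_c, w_c, add_comm, cz_add t.c3]
  have := congrArg (fun v => v * c ^ (j : ℕ)) (bcb t.b2 t.c3 t.bc)
  simpa [mul_assoc] using this

theorem s3 {a b c : G} (t : Tri a b c) (α : Fin 3 → A4) (j : Fin 3) :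
    b * w a c (A4.c 2 * α j) = w a c (A4.c 1 * α (j + 1)) *
      (hw a b c (α (j + 1)) (j + 1) * (hw a b c (α j) j)⁻¹) := by
  rw [w_mul t.a2 t.c3 t.ac, w_mul t.a2 t.c3 t.ac, ← mul_assoc (_ * _) (hw a b c _ _), mul_assoc (w a c _),
    ← s0 a b c α, eq_mul_inv_iff_mul_eq, mul_assoc, mul_assoc, ← s0 a b c α,
    w_c, w_c, w_c, w_c, add_comm, cz_add t.c3]
  have := congrArg (fun v => v * c ^ (j : ℕ)) (bc2b t.b2 t.c3 t.bc)
  simpa [mul_assoc] using this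

theorem abrel {a b c : G} (t : Tri a b c) {p1 p2 p3 q1 q2 q3 : A4} {w1 w2 w3 : G}
    (h1 : b * w a c p1 = w a c q1 * w1) (h2 : b * w a c p2 = w a c q2 * w2)
    (h3 : b * w a c p3 = w a c q3 * w3) (e1 : A4.a * q1 = p2) (e2 : A4.a * q2 = p3)
    (e3 : A4.a * q3 = p1) : w3 * w2 * w1 = 1 := by
  have k : ∀ {p q p' u}, b * w a c p = w a c q * u → A4.a * q = p' →
      a * b * w a c p = w a c p' * u := by
    intro p q p' u h e
    rw [mul_assoc, h, ← e, w_mul t.a2 t.c3 t.ac, w_a, mul_assoc]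
  have h := t.ab
  have : (a * b) ^ 3 * w a c p1 = w a c p1 * (w3 * w2 * w1) := by
    rw [pow_succ, pow_two, mul_assoc, k h1 e1, mul_assoc, ← mul_assoc (a * b) (w a c p2), k h2 e2,
      mul_assoc (w a c p3), ← mul_assoc (a * b), k h3 e3]
    simp only [mul_assoc]
  rw [h, one_mul] at this
  exact mul_eq_left.mp this.symm

theorem gen_all {a b c : G} (t : Tri a b c) (α : Fin 3 → A4)
    (hα : ∀ p : A4, (∃ i, p = A4.c i) ∨ ∃ i j, p = A4.c i * α j) (H : Subgroup G)
    (hH : ∀ j, hw a b c (α j) j ∈ H) (g : G) : ∃ p : A4, ∃ h ∈ H, g = w a c p * h := by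
  let S : Set G := {g | ∃ p : A4, ∃ h ∈ H, g = w a c p * h}
  have hA : ∀ p, ∀ s ∈ S, w a c p * s ∈ S := by
    rintro p _ ⟨q, h, hh, rfl⟩
    exact ⟨p * q, h, hh, by rw [w_mul t.a2 t.c3 t.ac, mul_assoc]⟩
  have hb : ∀ s ∈ S, b * s ∈ S := by
    rintro _ ⟨q, h, hh, rfl⟩
    rcases hα q with ⟨i, rfl⟩ | ⟨i, j, rfl⟩
    · exact ⟨_, _, H.mul_mem (hH i) hh, by rw [← mul_assoc, s0 a b c α, mul_assoc]⟩
    · fin_cases i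
      · refine ⟨A4.c j, _, H.mul_mem (H.inv_mem (hH j)) hh, ?_⟩
        rw [← mul_assoc (w a c _), ← s1 t, mul_assoc]; congr 3; exact one_mul (α j)
      · exact ⟨_, _, H.mul_mem (H.mul_mem (hH (j + 2)) (H.inv_mem (hH j))) hh, by
          rw [← mul_assoc (w a c _), ← s2 t, mul_assoc]; rfl⟩
      · exact ⟨_, _, H.mul_mem (H.mul_mem (hH (j + 1)) (H.inv_mem (hH j))) hh, by
          rw [← mul_assoc (w a c _), ← s3 t, mul_assoc]; rfl⟩
  have key : ∀ g ∈ Subgroup.closure {a, b, c}, (∀ s ∈ S, g * s ∈ S) ∧ (∀ s ∈ S, g⁻¹ * s ∈ S) := by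
    intro g hg
    induction hg using Subgroup.closure_induction with
    | mem x hx =>
      rcases hx with rfl | rfl | rfl
      · have := hA A4.a
        rw [w_a] at this
        rw [inv_eq_of_mul_eq_one_left t.a2]; exact ⟨this, this⟩
      · rw [inv_eq_of_mul_eq_one_left t.b2]; exact ⟨hb, hb⟩
      · constructor
        · have := hA (A4.c 1); rw [w_c] at this; simpa using this
        · have := hA (A4.c 2); rw [w_c] at this
          rw [inv_eq_of_mul_eq_one_left (b := x) (a := x ^ 2) (by rw [← pow_succ, t.c3])]
          exact this
    | one => simp
    | mul x y _ _ hx hy =>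
      refine ⟨fun s hs => ?_, fun s hs => ?_⟩
      · rw [mul_assoc]; exact hx.1 _ (hy.1 _ hs)
      · rw [mul_inv_rev, mul_assoc]; exact hy.2 _ (hx.2 _ hs)
    | inv x _ hx => rw [inv_inv]; exact ⟨hx.2, hx.1⟩
  have h1 : (1 : G) ∈ S := ⟨1, 1, H.one_mem, by
    change _ = c ^ 0 * 1; simp⟩
  have := (key g (t.gen ▸ Subgroup.mem_top g)).1 1 h1
  rwa [mul_one] at this

theorem gen_stage {a b c : G} (t : Tri a b c) (Δ : Subgroup G)
    (ha : ∀ x : G ⧸ Δ, a • x ≠ x) (hc : ∀ x : G ⧸ Δ, c • x ≠ x) (α : Fin 3 → A4)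
    (hα : ∀ p : A4, (∃ i, p = A4.c i) ∨ ∃ i j, p = A4.c i * α j)
    (hm : ∀ j, hw a b c (α j) j ∈ Δ) :
    Δ = Subgroup.closure (Set.range fun j => hw a b c (α j) j) := by
  apply le_antisymm
  · intro d hd
    have hle : Subgroup.closure (Set.range fun j => hw a b c (α j) j) ≤ Δ := by
      rw [Subgroup.closure_le]; rintro _ ⟨j, rfl⟩; exact hm j
    obtain ⟨p, h, hh, rfl⟩ := gen_all t α hα (Subgroup.closure (Set.range fun j => hw a b c (α j) j))
      (fun j => Subgroup.subset_closure ⟨j, rfl⟩) d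
    have hw : w a c p ∈ Δ := (Subgroup.mul_mem_cancel_right _ (hle hh)).mp hd
    have : p = 1 := w_free t.a2 t.c3 t.ac ha hc p (QuotientGroup.mk 1 : G ⧸ Δ) (by
      change (QuotientGroup.mk (_ * 1) : G ⧸ Δ) = _
      rw [eq_comm, QuotientGroup.eq]; simpa using hw)
    rw [this]
    change c ^ 0 * h ∈ _
    simpa using hh
  · rw [Subgroup.closure_le]; rintro _ ⟨j, rfl⟩; exact hm j

theorem closure_top {Δ : Subgroup G} (X : Fin 3 → Δ)
    (h : Δ = Subgroup.closure (Set.range fun j => (X j : G))) :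
    Subgroup.closure (Set.range X) = ⊤ := by
  apply Subgroup.map_injective Δ.subtype_injective
  rw [MonoidHom.map_closure, ← Set.range_comp, ← MonoidHom.range_eq_map, Subgroup.range_subtype]
  exact h.symm

end gen

section abs
variable {D : Type*} [Group D]

theorem no_surj (X : Fin 3 → D) (h : Subgroup.closure (Set.range X) = ⊤)
    (f : D →* Multiplicative ℤ) (hf : Function.Surjective f) (h1 : ∀ j, f (X j) = 1) : False := by
  have : f = 1 := MonoidHom.eq_of_eqOn_dense h (by rintro _ ⟨j, rfl⟩; simpa using h1 j)
  obtain ⟨d, hd⟩ := hf (Multiplicative.ofAdd 1)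
  rw [this] at hd
  have h3 : (0 : ℤ) = 1 := hd
  omega

theorem eq_one_of_toAdd {v : Multiplicative ℤ} (h : Multiplicative.toAdd v = 0) : v = 1 := h

theorem no_surj1 (X : Fin 3 → D) (h : Subgroup.closure (Set.range X) = ⊤)
    (f : D →* Multiplicative ℤ) (hf : Function.Surjective f)
    (r0 : X 0 * X 0 * X 0 = 1) (r1 : X 1 * X 1 * X 1 = 1)
    (r2 : X 2 * X 2 * X 2 = 1 ∨ X 2 * (X 2 * (X 0)⁻¹) * (X 2 * (X 1)⁻¹) = 1 ∨
      X 2 * (X 2 * (X 1)⁻¹) * (X 2 * (X 0)⁻¹) = 1) : False := by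
  have g : ∀ d : D, d = 1 → Multiplicative.toAdd (f d) = 0 := by rintro _ rfl; simp
  have a0 := g _ r0
  have a1 := g _ r1
  have a2 : _ ∨ _ ∨ _ := r2.imp (g _) (Or.imp (g _) (g _))
  simp only [map_mul, map_inv, toAdd_mul, toAdd_inv] at a0 a1 a2
  refine no_surj X h f hf fun j => eq_one_of_toAdd ?_
  fin_cases j
  · change Multiplicative.toAdd (f (X 0)) = 0; omega
  · change Multiplicative.toAdd (f (X 1)) = 0; omega
  · change Multiplicative.toAdd (f (X 2)) = 0; omega

theorem fig8_abs (Ω : Subgroup D) [Ω.Normal] (h5 : Ω.index = 5)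
    (f : Ω →* (Fin 5 → Multiplicative ℤ)) (hf : Function.Surjective f) (t u : D)
    (hgen : Subgroup.closure {t, u} = ⊤)
    (hr : t * u * t⁻¹ = u * (t⁻¹ * u⁻¹ * t) * u * u) : False := by
  have hu : u ∈ Ω := by
    have hcard : Nat.card (D ⧸ Ω) = 5 := h5
    have : Fact (Nat.Prime 5) := ⟨by norm_num⟩
    have hcyc : IsCyclic (D ⧸ Ω) := isCyclic_of_prime_card hcard
    have hcomm : ∀ p q : D ⧸ Ω, p * q = q * p := fun p q => (IsCyclic.isMulCommutative).is_comm.comm p q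
    have h1 := congrArg (QuotientGroup.mk' Ω) hr
    simp only [map_mul, map_inv] at h1
    rw [← QuotientGroup.eq_one_iff]
    change QuotientGroup.mk' Ω u = 1
    generalize (QuotientGroup.mk' Ω) u = v at *
    generalize (QuotientGroup.mk' Ω) t = s at *
    rw [hcomm s v, mul_inv_cancel_right, hcomm s⁻¹ v⁻¹, inv_mul_cancel_right, mul_inv_cancel, one_mul] at h1
    exact left_eq_mul.mp h1
  let U : Ω := ⟨u, hu⟩
  let T5 : Ω := ⟨t ^ 5, by have := Ω.pow_index_mem t; rwa [h5] at this⟩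
  let C : D →* MulAut Ω := MulAut.conjNormal
  have hC : ∀ (g : D) (v : Ω), (C g v : D) = g * v * g⁻¹ := fun g v => rfl
  have hU : C t U = U * (C t⁻¹ U)⁻¹ * U * U := by
    apply Subtype.ext
    simp only [Subgroup.coe_mul, Subgroup.coe_inv, hC]
    change t * u * t⁻¹ = u * _ * u * u
    rw [hr]; change _ = u * (t⁻¹ * u * t⁻¹⁻¹)⁻¹ * u * u
    group
  have hT5 : ∀ v : Ω, f (C (t ^ (5 : ℤ)) v) = f v := by
    intro v
    have : C (t ^ (5 : ℤ)) v = T5 * v * T5⁻¹ := by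
      apply Subtype.ext; rw [hC]; change _ = t ^ 5 * (v : D) * (t ^ 5)⁻¹
      rw [show (5 : ℤ) = ((5 : ℕ) : ℤ) by norm_num, zpow_natCast]
    rw [this, map_mul, map_mul, map_inv, mul_comm (f T5), mul_inv_cancel_right]
  have hCadd : ∀ (m n : ℤ) (v : Ω), C (t ^ m) (C (t ^ n) v) = C (t ^ (m + n)) v := by
    intro m n v
    rw [zpow_add, map_mul]; rfl
  let K : Subgroup Ω := ⨅ n : ℤ, (f.comp (C (t ^ n)).toMonoidHom).ker
  have hK : ∀ v : Ω, v ∈ K ↔ ∀ n : ℤ, f (C (t ^ n) v) = 1 := by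
    intro v; simp only [K, Subgroup.mem_iInf, MonoidHom.mem_ker]; rfl
  have hUK : U ∈ K := by
    rw [hK]
    intro n
    funext i
    let s : ℤ → ℤ := fun n => Multiplicative.toAdd (f (C (t ^ n) U) i)
    have p1 : ∀ n, s (n + 5) = s n := by
      intro n
      simp only [s]
      rw [add_comm, ← hCadd, hT5]
    have p2 : ∀ n, s (n + 2) = 3 * s (n + 1) - s n := by
      intro n
      have e1 : C (t ^ (n + 1)) (C t U) = C (t ^ (n + 2)) U := by
        have := hCadd (n + 1) 1 U
        rw [zpow_one] at this; rw [this]; ring_nf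
      have e2 : C (t ^ (n + 1)) (C t⁻¹ U) = C (t ^ n) U := by
        have := hCadd (n + 1) (-1) U
        rw [zpow_neg_one] at this; rw [this]; ring_nf
      have := congrArg (fun v => Multiplicative.toAdd (f (C (t ^ (n + 1)) v) i)) hU
      simp only [map_mul, map_inv (f), map_inv (C (t ^ (n + 1))), e1, e2, Pi.mul_apply, Pi.inv_apply, toAdd_mul, toAdd_inv] at this
      simp only [s]
      omega
    have q0 := p2 n
    have q1 := p2 (n + 1)
    have q2 := p2 (n + 2)
    have q3 := p2 (n + 3)
    have q4 := p2 (n + 4)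
    have q5 := p1 n
    have q6 := p1 (n + 1)
    simp only [add_assoc] at q0 q1 q2 q3 q4 q5 q6
    norm_num at q0 q1 q2 q3 q4 q5 q6
    apply eq_one_of_toAdd
    change s n = 0
    omega
  have hKC : ∀ v ∈ K, ∀ m : ℤ, C (t ^ m) v ∈ K := by
    intro v hv m
    rw [hK] at hv ⊢
    intro n; rw [hCadd]; exact hv _
  have hdec : ∀ d : D, ∃ v ∈ K, ∃ m : ℤ, d = v * t ^ m := by
    intro d
    have hd : d ∈ Subgroup.closure {t, u} := hgen ▸ Subgroup.mem_top d
    induction hd using Subgroup.closure_induction with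
    | mem d hd =>
      rcases hd with rfl | rfl
      · exact ⟨1, K.one_mem, 1, by simp⟩
      · exact ⟨U, hUK, 0, by simp [U]⟩
    | one => exact ⟨1, K.one_mem, 0, by simp⟩
    | mul x y _ _ hx hy =>
      obtain ⟨v, hv, m, rfl⟩ := hx
      obtain ⟨v', hv', m', rfl⟩ := hy
      refine ⟨v * C (t ^ m) v', K.mul_mem hv (hKC _ hv' m), m + m', ?_⟩
      rw [Subgroup.coe_mul, hC, zpow_add]; group
    | inv x _ hx =>
      obtain ⟨v, hv, m, rfl⟩ := hx
      refine ⟨C (t ^ (-m)) v⁻¹, hKC _ (K.inv_mem hv) _, -m, ?_⟩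
      rw [hC, Subgroup.coe_inv]; group
  have hfin : ∀ v : Fin 5 → Multiplicative ℤ, ∃ m : ℤ, v ^ 5 = f T5 ^ m := by
    intro v
    obtain ⟨d, rfl⟩ := hf v
    obtain ⟨κ, hκ, m, hd⟩ := hdec d
    have hfκ : f κ = 1 := by
      have := (hK κ).1 hκ 0
      simpa using this
    refine ⟨m, ?_⟩
    have h1 : f (κ⁻¹ * d) = f d := by rw [map_mul, map_inv, hfκ]; simp
    rw [← h1, ← map_pow, ← map_zpow]
    congr 1
    apply Subtype.ext
    rw [Subgroup.coe_pow, Subgroup.coe_mul, Subgroup.coe_inv, hd, inv_mul_cancel_left, Subgroup.coe_zpow]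
    change _ = (t ^ 5) ^ m
    rw [← zpow_natCast, ← zpow_natCast, ← zpow_mul, ← zpow_mul, mul_comm]
  obtain ⟨k, hk⟩ := hfin (Pi.mulSingle 0 (Multiplicative.ofAdd 1))
  obtain ⟨l, hl⟩ := hfin (Pi.mulSingle 1 (Multiplicative.ofAdd 1))
  have k0 := congrArg Multiplicative.toAdd (congrFun hk 0)
  have k1 := congrArg Multiplicative.toAdd (congrFun hk 1)
  have l1 := congrArg Multiplicative.toAdd (congrFun hl 1)
  simp [toAdd_pow, toAdd_zpow] at k0 k1 l1
  rcases k1 with h | h <;> simp_all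

theorem fig8 (X : Fin 3 → D) (h : Subgroup.closure (Set.range X) = ⊤)
    (Ω : Subgroup D) [Ω.Normal] (h5 : Ω.index = 5)
    (f : Ω →* (Fin 5 → Multiplicative ℤ)) (hf : Function.Surjective f)
    (r1 : X 2 * (X 1)⁻¹ * (X 2)⁻¹ * X 0 = 1)
    (r2 : X 0 * (X 2)⁻¹ * (X 1 * (X 0)⁻¹) * (X 1)⁻¹ = 1) : False := by
  have hz : X 2 = X 1 * (X 0)⁻¹ * (X 1)⁻¹ * X 0 := by
    have : (X 2)⁻¹ = (X 0)⁻¹ * (X 1 * X 0 * (X 1)⁻¹) := by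
      rw [eq_inv_mul_iff_mul_eq, ← mul_inv_eq_one]
      rw [← r2]; group
    rw [← inv_inv (X 2), this]; group
  refine fig8_abs Ω h5 f hf (X 1) (X 0 * (X 1)⁻¹) ?_ ?_
  · rw [eq_top_iff, ← h, Subgroup.closure_le]
    have m1 : X 1 ∈ Subgroup.closure {X 1, X 0 * (X 1)⁻¹} := Subgroup.subset_closure (by simp)
    have m2 : X 0 * (X 1)⁻¹ ∈ Subgroup.closure {X 1, X 0 * (X 1)⁻¹} :=
      Subgroup.subset_closure (by simp)
    have m0 : X 0 ∈ Subgroup.closure {X 1, X 0 * (X 1)⁻¹} := by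
      simpa using Subgroup.mul_mem _ m2 m1
    rintro _ ⟨j, rfl⟩
    fin_cases j
    · exact m0
    · exact m1
    · change X 2 ∈ _
      rw [hz]
      exact Subgroup.mul_mem _ (Subgroup.mul_mem _ (Subgroup.mul_mem _ m1 (Subgroup.inv_mem _ m0))
        (Subgroup.inv_mem _ m1)) m0
  · rw [hz] at r1
    generalize X 0 = x at *
    generalize X 1 = y at *
    have e : (y * x * y⁻¹)⁻¹ * (x * y⁻¹ * x⁻¹ * y * x * y⁻¹ * x) = 1 := by rw [← r1]; group
    have e := congrArg (fun v => v * y⁻¹) (inv_mul_eq_one.mp e)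
    calc y * (x * y⁻¹) * y⁻¹ = y * x * y⁻¹ * y⁻¹ := by group
      _ = _ := e
      _ = _ := by group

theorem sister (X : Fin 3 → D) (h : Subgroup.closure (Set.range X) = ⊤)
    (f : D →* Multiplicative ℤ) (hf : Function.Surjective f) {Q : Type*} [Group Q] (P : D →* Q)
    (p0 : P (X 0) ∈ Subgroup.zpowers (P (X 2))) (p1 : P (X 1) ∈ Subgroup.zpowers (P (X 2)))
    (p2 : P (X 2) ≠ 1)
    (r1 : X 2 * (X 0)⁻¹ * X 2 * X 1 = 1)
    (r2 : X 0 * (X 0 * (X 1)⁻¹) * (X 2 * (X 1)⁻¹) = 1) :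
    Nonempty (Abelianization D ≃* Multiplicative ℤ × Multiplicative (ZMod 5)) := by
  let o : D →* Abelianization D := Abelianization.of
  have ho : ∀ d, o d = 1 → d ∈ commutator D := fun d hd => by
    rw [← Abelianization.ker_of D]; exact hd
  have a1 : o (X 0) = o (X 2) ^ 2 * o (X 1) := by
    have := congrArg o r1
    simp only [map_mul, map_inv, map_one] at this
    rw [← inv_mul_eq_one, ← this, pow_two, mul_comm (o (X 2)) (o (X 0))⁻¹]; simp only [mul_assoc]
  have a2 : o (X 2) ^ 5 = 1 := by
    have := congrArg o r2
    simp only [map_mul, map_inv, map_one, a1] at this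
    rw [← this]
    generalize o (X 2) = z at *
    generalize o (X 1) = y at *
    have : z ^ 2 * y * (z ^ 2 * y * y⁻¹) * (z * y⁻¹) = z ^ 2 * z ^ 2 * z * (y * y⁻¹ * (y * y⁻¹)) := by
      rw [mul_inv_cancel_right, mul_inv_cancel, mul_assoc (z ^ 2) y, mul_comm y, mul_assoc, mul_assoc, mul_comm y,
        mul_assoc, inv_mul_cancel]
      simp only [mul_assoc, one_mul]
    rw [this, mul_inv_cancel]; simp only [mul_one, pow_succ, pow_zero, one_mul, mul_assoc]
  let Φ : Multiplicative ℤ × Multiplicative (ZMod 5) →* Abelianization D :=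
    MonoidHom.coprod (zpowersHom _ (o (X 1)))
      (AddMonoidHom.toMultiplicativeLeft (ZMod.lift 5 ⟨(zmultiplesHom (Additive (Abelianization D)) (Additive.ofMul (o (X 2)))), by
        change Additive.ofMul (o (X 2) ^ (5 : ℤ)) = 0
        exact congrArg Additive.ofMul (by exact_mod_cast a2)⟩))
  have hΦ : ∀ m k : ℤ, Φ (Multiplicative.ofAdd m, Multiplicative.ofAdd (k : ZMod 5)) =
      o (X 1) ^ m * o (X 2) ^ k := by
    intro m k
    simp only [Φ, MonoidHom.coprod_apply, zpowersHom_apply]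
    congr 1
    change Additive.toMul (ZMod.lift 5 _ (k : ZMod 5)) = _
    rw [ZMod.lift_coe]; rfl
  have hP : commutator D ≤ P.ker := by
    have hz : ∀ d, P d ∈ Subgroup.zpowers (P (X 2)) := by
      intro d
      have hle : Subgroup.closure (Set.range X) ≤ (Subgroup.zpowers (P (X 2))).comap P := by
        rw [Subgroup.closure_le]
        rintro _ ⟨j, rfl⟩
        fin_cases j
        · exact p0
        · exact p1
        · exact Subgroup.mem_zpowers _
      exact hle (h ▸ Subgroup.mem_top d)
    rw [commutator_def, Subgroup.commutator_le]
    intro d _ e _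
    obtain ⟨m, hm⟩ := hz d
    obtain ⟨n, hn⟩ := hz e
    have hm : P (X 2) ^ m = P d := hm
    have hn : P (X 2) ^ n = P e := hn
    rw [MonoidHom.mem_ker, map_commutatorElement, commutatorElement_eq_one_iff_mul_comm, ← hm, ← hn]
    rw [← zpow_add, ← zpow_add, add_comm]
  have hP5 : P (X 2) ^ 5 = 1 := by
    rw [← map_pow]; exact hP (ho _ (by rw [map_pow]; exact a2))
  have hord : orderOf (P (X 2)) = 5 := by
    have : Fact (Nat.Prime 5) := ⟨by norm_num⟩
    exact orderOf_eq_prime hP5 p2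
  let F : Abelianization D →* Multiplicative ℤ := Abelianization.lift f
  have hF : ∀ d, F (o d) = f d := fun d => Abelianization.lift_apply_of f d
  have fz : f (X 2) = 1 := by
    have := congrArg (fun v => Multiplicative.toAdd (F v)) a2
    simp only [map_pow, hF, toAdd_pow, map_one, toAdd_one] at this
    apply eq_one_of_toAdd; simpa using this
  have fy : f (X 1) ≠ 1 := by
    intro hy
    refine no_surj X h f hf fun j => ?_
    fin_cases j
    · change f (X 0) = 1
      rw [← hF, a1, map_mul, map_pow, hF, hF, hy, fz]; simp
    · exact hy
    · exact fz
  refine ⟨(MulEquiv.ofBijective Φ ⟨?_, ?_⟩).symm⟩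
  · rw [injective_iff_map_eq_one]
    rintro ⟨m, k⟩ hmk
    obtain ⟨m, rfl⟩ := Multiplicative.ofAdd.surjective m
    obtain ⟨k, rfl⟩ := Multiplicative.ofAdd.surjective k
    obtain ⟨k, rfl⟩ := ZMod.intCast_surjective k
    rw [hΦ] at hmk
    have hm : m = 0 := by
      have := congrArg (fun v => Multiplicative.toAdd (F v)) hmk
      simp only [map_mul, map_zpow, hF, fz, toAdd_mul, toAdd_zpow, map_one, toAdd_one, one_zpow] at this
      have h2 : Multiplicative.toAdd (f (X 1)) ≠ 0 := fun h => fy (eq_one_of_toAdd h)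
      simpa [h2] using this
    subst hm
    rw [zpow_zero, one_mul, ← map_zpow] at hmk
    have h1 : P (X 2) ^ k = 1 := by rw [← map_zpow]; exact hP (ho _ hmk)
    have h2 : (k : ZMod 5) = 0 := by
      rw [ZMod.intCast_zmod_eq_zero_iff_dvd]
      have := orderOf_dvd_iff_zpow_eq_one.mpr h1
      rwa [hord] at this
    rw [h2]; rfl
  · intro v
    obtain ⟨d, rfl⟩ := QuotientGroup.mk_surjective v
    change ∃ q, Φ q = o d
    have hle : Subgroup.closure (Set.range X) ≤ Φ.range.comap o := by
      rw [Subgroup.closure_le]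
      rintro _ ⟨j, rfl⟩
      fin_cases j
      · change o (X 0) ∈ Φ.range
        refine ⟨(Multiplicative.ofAdd 1, Multiplicative.ofAdd ((2 : ℤ) : ZMod 5)), ?_⟩
        rw [hΦ, a1, mul_comm, zpow_one]
        norm_cast
      · refine ⟨(Multiplicative.ofAdd 1, Multiplicative.ofAdd ((0 : ℤ) : ZMod 5)), ?_⟩
        rw [hΦ]; simp
      · refine ⟨(Multiplicative.ofAdd 0, Multiplicative.ofAdd ((1 : ℤ) : ZMod 5)), ?_⟩
        rw [hΦ]; simp
    exact hle (h ▸ Subgroup.mem_top d)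

end abs

section core
variable {G : Type*} [Group G]

def αs : Fin 3 → A4 := ![A4.m 1 0, A4.m 0 2, A4.m 1 1]

def Ts : A4 → A4 := T (αs 0) (αs 1) (αs 2)

def ψs (j : Fin 3) (q : A4) : A4 := (αs j)⁻¹ * Ts (A4.c j * q)

theorem Ts0 : ∀ j, Ts (A4.c j) = αs j := by decide +kernel
theorem Ts1 : ∀ j, Ts (αs j) = A4.c j := by decide +kernel
theorem Ts2 : ∀ j, Ts (A4.c 1 * αs j) = A4.c 2 * αs (j + 2) := by decide +kernel
theorem Ts3 : ∀ j, Ts (A4.c 2 * αs j) = A4.c 1 * αs (j + 1) := by decide +kernel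
theorem αs_cover : ∀ p : A4, (∃ i, p = A4.c i) ∨ ∃ i j, p = A4.c i * αs j := by decide +kernel
theorem ψs02 : ∀ q, ψs 0 (ψs 2 q) = q := by decide +kernel
theorem ψs1 : ∀ q, ψs 1 q = ψs 0 (ψs 0 (ψs 0 q)) := by decide +kernel
theorem ψs_ne : ∃ q, ψs 2 q ≠ q := by decide +kernel

theorem sister_perm {a b c : G} (t : Tri a b c) (Δ : Subgroup G)
    (ha : ∀ x : G ⧸ Δ, a • x ≠ x) (hc : ∀ x : G ⧸ Δ, c • x ≠ x)
    (X : Fin 3 → Δ) (hX : ∀ j, (X j : G) = hw a b c (αs j) j) :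
    let P : Δ →* Equiv.Perm (G ⧸ Δ) := (MulAction.toPermHom G (G ⧸ Δ)).comp Δ.subtype
    P (X 0) ∈ Subgroup.zpowers (P (X 2)) ∧ P (X 1) ∈ Subgroup.zpowers (P (X 2)) ∧ P (X 2) ≠ 1 := by
  intro P
  have hm : ∀ j, hw a b c (αs j) j ∈ Δ := fun j => hX j ▸ (X j).2
  let e : A4 → G ⧸ Δ := fun q => QuotientGroup.mk (w a c q)
  have hP : ∀ d x, P d x = (d : G) • x := fun d x => rfl
  have he : ∀ x : G ⧸ Δ, ∃ q, x = e q := by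
    intro x
    obtain ⟨g, rfl⟩ := QuotientGroup.mk_surjective x
    obtain ⟨p, h, hh, rfl⟩ := gen_all t αs αs_cover Δ hm g
    exact ⟨p, by simp only [e]; rw [eq_comm, QuotientGroup.eq]; simpa using hh⟩
  have einj : ∀ p q, e p = e q → p = q := by
    intro p q hpq
    simp only [e] at hpq
    rw [QuotientGroup.eq] at hpq
    have h2 : p⁻¹ * q = 1 := w_free t.a2 t.c3 t.ac ha hc (p⁻¹ * q) (QuotientGroup.mk 1 : G ⧸ Δ) (by
      change (QuotientGroup.mk (_ * 1) : G ⧸ Δ) = _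
      rw [eq_comm, QuotientGroup.eq]
      have : w a c (p⁻¹ * q) = (w a c p)⁻¹ * w a c q := by
        rw [w_mul t.a2 t.c3 t.ac]
        congr 1
        exact map_inv (wHom t.a2 t.c3 t.ac) p
      rw [this]; simpa using hpq)
    exact inv_mul_eq_one.mp h2
  have step : ∀ {p q : A4} {h : G}, h ∈ Δ → b * w a c p = w a c q * h → b • e p = e q := by
    intro p q h hh hpq
    change (QuotientGroup.mk (b * w a c p) : G ⧸ Δ) = QuotientGroup.mk (w a c q)
    rw [hpq, eq_comm, QuotientGroup.eq]; simpa using hh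
  have hb : ∀ p, b • e p = e (Ts p) := by
    intro p
    rcases αs_cover p with ⟨i, rfl⟩ | ⟨i, j, rfl⟩
    · rw [Ts0]; exact step (hm i) (s0 a b c αs i)
    · fin_cases i
      · change b • e (1 * αs j) = e (Ts (1 * αs j))
        rw [one_mul, Ts1]; exact step (Δ.inv_mem (hm j)) (s1 t αs j)
      · change b • e (A4.c 1 * αs j) = e (Ts (A4.c 1 * αs j))
        rw [Ts2]; exact step (Δ.mul_mem (hm (j + 2)) (Δ.inv_mem (hm j))) (s2 t αs j)
      · change b • e (A4.c 2 * αs j) = e (Ts (A4.c 2 * αs j))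
        rw [Ts3]; exact step (Δ.mul_mem (hm (j + 1)) (Δ.inv_mem (hm j))) (s3 t αs j)
  have hwm : ∀ p q, w a c p • e q = e (p * q) := by
    intro p q
    simp only [e]; rw [w_mul t.a2 t.c3 t.ac]; rfl
  have hPe : ∀ j q, P (X j) (e q) = e (ψs j q) := by
    intro j q
    rw [hP, hX, hw, ← smul_smul, ← smul_smul, inv_smul_eq_iff, ← w_c a c, hwm, hb, hwm, ψs,
      mul_inv_cancel_left]
  have e0 : P (X 0) = (P (X 2))⁻¹ := by
    rw [eq_inv_iff_mul_eq_one]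
    ext x
    obtain ⟨q, rfl⟩ := he x
    rw [Equiv.Perm.mul_apply, hPe, hPe, ψs02]; rfl
  have e1 : P (X 1) = P (X 0) * (P (X 0) * P (X 0)) := by
    ext x
    obtain ⟨q, rfl⟩ := he x
    rw [Equiv.Perm.mul_apply, Equiv.Perm.mul_apply, hPe, hPe, hPe, hPe, ψs1]
  have m0 : P (X 0) ∈ Subgroup.zpowers (P (X 2)) := by
    rw [e0]; exact Subgroup.inv_mem _ (Subgroup.mem_zpowers _)
  refine ⟨m0, ?_, ?_⟩
  · rw [e1]; exact Subgroup.mul_mem _ m0 (Subgroup.mul_mem _ m0 m0)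
  · intro h
    obtain ⟨q, hq⟩ := ψs_ne
    refine hq (einj _ _ ?_)
    rw [← hPe, h]; rfl

theorem core1 {a b c : G} (t : Tri a b c) (Δ : Subgroup G) (hg : Good Δ) (α : Fin 3 → A4)
    (hr : α = ![A4.m 0 0, A4.m 0 1, A4.m 0 2] ∨ α = ![A4.m 0 0, A4.m 0 1, A4.m 1 2] ∨
      α = ![A4.m 0 0, A4.m 0 1, A4.m 2 2] ∨ α = ![A4.m 1 1, A4.m 1 2, A4.m 2 0] ∨ α = αs)
    (hm : ∀ j, hw a b c (α j) j ∈ Δ) :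
    α = αs ∧ Δ = Subgroup.closure (Set.range fun j => hw a b c (α j) j) ∧
      Nonempty (Abelianization Δ ≃* Multiplicative ℤ × Multiplicative (ZMod 5)) := by
  obtain ⟨-, ha, hb, hc⟩ := count_stage t Δ hg
  obtain ⟨-, -, ⟨f, hf⟩, Ω, hΩ, h5, φ, hφ⟩ := hg
  have hcov : ∀ p : A4, (∃ i, p = A4.c i) ∨ ∃ i j, p = A4.c i * α j := by
    rcases hr with rfl | rfl | rfl | rfl | rfl <;> decide +kernel
  let X : Fin 3 → Δ := fun j => ⟨hw a b c (α j) j, hm j⟩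
  have hD := gen_stage t Δ ha hc α hcov hm
  have hX : Subgroup.closure (Set.range X) = ⊤ := closure_top X hD
  have q0 := s0 a b c α
  have q1 := s1 t α
  have q2 := s2 t α
  have q3 := s3 t α
  rcases hr with rfl | rfl | rfl | rfl | rfl
  · exact (no_surj1 X hX f hf
      (Subtype.ext (abrel t (q0 0) (q0 0) (q0 0) (by decide +kernel) (by decide +kernel) (by decide +kernel)))
      (Subtype.ext (abrel t (q0 1) (q0 1) (q0 1) (by decide +kernel) (by decide +kernel) (by decide +kernel)))
      (Or.inl (Subtype.ext (abrel t (q0 2) (q0 2) (q0 2) (by decide +kernel) (by decide +kernel)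
        (by decide +kernel))))).elim
  · exact (no_surj1 X hX f hf
      (Subtype.ext (abrel t (q0 0) (q0 0) (q0 0) (by decide +kernel) (by decide +kernel) (by decide +kernel)))
      (Subtype.ext (abrel t (q0 1) (q0 1) (q0 1) (by decide +kernel) (by decide +kernel) (by decide +kernel)))
      (Or.inr (Or.inl (Subtype.ext (abrel t (q3 1) (q2 0) (q0 2) (by decide +kernel) (by decide +kernel)
        (by decide +kernel)))))).elim
  · exact (no_surj1 X hX f hf
      (Subtype.ext (abrel t (q0 0) (q0 0) (q0 0) (by decide +kernel) (by decide +kernel) (by decide +kernel)))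
      (Subtype.ext (abrel t (q0 1) (q0 1) (q0 1) (by decide +kernel) (by decide +kernel) (by decide +kernel)))
      (Or.inr (Or.inr (Subtype.ext (abrel t (q2 0) (q3 1) (q0 2) (by decide +kernel) (by decide +kernel)
        (by decide +kernel)))))).elim
  · exact (fig8 X hX Ω h5 φ hφ
      (Subtype.ext (abrel t (q0 0) (q1 2) (q3 1) (by decide +kernel) (by decide +kernel) (by decide +kernel)))
      (Subtype.ext (abrel t (q1 1) (q3 0) (q3 2) (by decide +kernel) (by decide +kernel)
        (by decide +kernel)))).elim
  · obtain ⟨u1, u2, u3⟩ := sister_perm t Δ ha hc X (fun j => rfl)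
    exact ⟨rfl, hD, sister X hX f hf _ u1 u2 u3
      (Subtype.ext (abrel t (q0 1) (q0 2) (q2 0) (by decide +kernel) (by decide +kernel) (by decide +kernel)))
      (Subtype.ext (abrel t (q3 1) (q2 1) (q0 0) (by decide +kernel) (by decide +kernel)
        (by decide +kernel)))⟩

theorem core2 {a b c : G} (t : Tri a b c) (Δ : Subgroup G) (hg : Good Δ) :
    Δ.index = 12 ∧ Nonempty (Abelianization Δ ≃* Multiplicative ℤ × Multiplicative (ZMod 5)) ∧
    ∃ g : G, Δ = (Subgroup.closure (Set.range fun j => hw a b c (αs j) j)).map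
      (MulAut.conj g).toMonoidHom := by
  obtain ⟨h12, ha, hb, hc⟩ := count_stage t Δ hg
  obtain ⟨g, x, y, z, hrep, mx, my, mz⟩ := key_stage t Δ h12 ha hb hc
  let θ : G →* G := (MulAut.conj g).toMonoidHom
  have t' := t.map θ (MulAut.conj g).surjective
  have hθ : ∀ p j, hw (θ a) (θ b) (θ c) p j = g * hw a b c p j * g⁻¹ := by
    intro p j; rw [map_hw]; rfl
  obtain ⟨h1, h2, h3⟩ := core1 t' Δ hg ![x, y, z] (by
      rcases hrep with ⟨rfl, rfl, rfl⟩ | ⟨rfl, rfl, rfl⟩ | ⟨rfl, rfl, rfl⟩ | ⟨rfl, rfl, rfl⟩ | ⟨rfl, rfl, rfl⟩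
      · exact Or.inl rfl
      · exact Or.inr (Or.inl rfl)
      · exact Or.inr (Or.inr (Or.inl rfl))
      · exact Or.inr (Or.inr (Or.inr (Or.inl rfl)))
      · exact Or.inr (Or.inr (Or.inr (Or.inr rfl)))) (by
      intro j
      rw [hθ]
      fin_cases j
      · exact mx
      · exact my
      · exact mz)
  refine ⟨h12, h3, g, ?_⟩
  rw [MonoidHom.map_closure, ← Set.range_comp]
  rw [h1] at h2
  rw [h2]
  congr 2
  funext j
  exact map_hw θ a b c (αs j) j

theorem core3 {a b c : G} (t : Tri a b c) (Δ Δ' : Subgroup G) (hg : Good Δ) (hg' : Good Δ') :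
    ∃ g : G, Subgroup.map (MulAut.conj g).toMonoidHom Δ = Δ' := by
  obtain ⟨-, -, g, h⟩ := core2 t Δ hg
  obtain ⟨-, -, g', h'⟩ := core2 t Δ' hg'
  refine ⟨g' * g⁻¹, ?_⟩
  rw [h, h', Subgroup.map_map]
  congr 1
  ext v
  simp [mul_assoc]

end core

section concrete
open Matrix

theorem eis_div (x y u v : ℤ) (h : 0 < u ^ 2 - u * v + v ^ 2) :
    ∃ k l : ℤ, (x - (k * u - l * v)) ^ 2 - (x - (k * u - l * v)) * (y - (k * v + l * u - l * v)) +
      (y - (k * v + l * u - l * v)) ^ 2 < u ^ 2 - u * v + v ^ 2 := by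
  set N := u ^ 2 - u * v + v ^ 2 with hN
  have near : ∀ s : ℤ, ∃ k : ℤ, -N ≤ 2 * (s - k * N) ∧ 2 * (s - k * N) ≤ N := by
    intro s
    refine ⟨(2 * s + N) / (2 * N), ?_, ?_⟩
    · have := Int.ediv_mul_le (2 * s + N) (b := 2 * N) (by omega)
      linarith
    · have := Int.lt_ediv_add_one_mul_self (2 * s + N) (b := 2 * N) (by omega)
      linarith
  obtain ⟨k, k1, k2⟩ := near (x * u - x * v + y * v)
  obtain ⟨l, l1, l2⟩ := near (y * u - x * v)
  refine ⟨k, l, ?_⟩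
  set s := x * u - x * v + y * v - k * N
  set r := y * u - x * v - l * N
  have key : ((x - (k * u - l * v)) ^ 2 - (x - (k * u - l * v)) * (y - (k * v + l * u - l * v)) +
      (y - (k * v + l * u - l * v)) ^ 2) * N = s ^ 2 - s * r + r ^ 2 := by
    simp only [s, r, hN]; ring
  have b1 : 4 * (s ^ 2 - s * r + r ^ 2) ≤ 3 * N ^ 2 := by
    nlinarith [mul_nonneg (sub_nonneg.2 k2) (by linarith : 0 ≤ 2 * s + N),
      mul_nonneg (sub_nonneg.2 l2) (by linarith : 0 ≤ 2 * r + N),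
      mul_nonneg (sub_nonneg.2 k2) (sub_nonneg.2 l2),
      mul_nonneg (by linarith : 0 ≤ 2 * s + N) (by linarith : 0 ≤ 2 * r + N),
      mul_nonneg (sub_nonneg.2 k2) (by linarith : 0 ≤ 2 * r + N),
      mul_nonneg (by linarith : 0 ≤ 2 * s + N) (sub_nonneg.2 l2)]
  have : 0 < N ^ 2 := by positivity
  nlinarith

variable {R : Type*} [CommRing R]

def E12 (k : R) : SpecialLinearGroup (Fin 2) R := ⟨!![1, k; 0, 1], by simp⟩

def SS : SpecialLinearGroup (Fin 2) R := ⟨!![0, 1; -1, 0], by simp⟩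

theorem E12_add (k l : R) : E12 (k + l) = E12 k * E12 l := by
  apply Subtype.ext
  change !![1, k + l; 0, 1] = !![1, k; 0, 1] * !![1, l; 0, 1]
  simp [Matrix.mul_fin_two, add_comm]

def E12Hom : Multiplicative R →* SpecialLinearGroup (Fin 2) R :=
  MonoidHom.mk' (fun k => E12 (Multiplicative.toAdd k)) (fun k l => E12_add _ _)

theorem E12_mem (H : Subgroup (SpecialLinearGroup (Fin 2) R)) (η : R) (h1 : E12 (1 : R) ∈ H)
    (h2 : E12 η ∈ H) (x y : ℤ) : E12 ((x : R) + y * η) ∈ H := by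
  have k1 : ∀ (r : R) (m : ℤ), E12 (m * r) = E12 r ^ m := by
    intro r m
    have := map_zpow (E12Hom (R := R)) (Multiplicative.ofAdd r) m
    rw [← ofAdd_zsmul, zsmul_eq_mul] at this
    exact this
  rw [E12_add, k1]
  refine H.mul_mem ?_ (H.zpow_mem h2 y)
  have := k1 1 x
  rw [mul_one] at this
  rw [this]
  exact H.zpow_mem h1 x

theorem SL2_gen (η : R) (hη : η ^ 2 + η + 1 = 0) (hspan : ∀ r : R, ∃ x y : ℤ, r = x + y * η)
    (H : Subgroup (SpecialLinearGroup (Fin 2) R)) (h1 : E12 (1 : R) ∈ H) (h2 : E12 η ∈ H)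
    (hS : SS ∈ H) (A : SpecialLinearGroup (Fin 2) R) : A ∈ H := by
  have hE : ∀ k : R, E12 k ∈ H := by
    intro k
    obtain ⟨x, y, rfl⟩ := hspan k
    exact E12_mem H η h1 h2 x y
  have hdet : ∀ A : SpecialLinearGroup (Fin 2) R, A 0 0 * A 1 1 - A 0 1 * A 1 0 = 1 := by
    intro A
    have := A.2
    rwa [Matrix.det_fin_two] at this
  have hEm : ∀ (k : R) (A : SpecialLinearGroup (Fin 2) R), E12 k * A ∈ H → A ∈ H :=
    fun k A h => (Subgroup.mul_mem_cancel_left H (hE k)).mp h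
  have hSm : ∀ (A : SpecialLinearGroup (Fin 2) R), SS * A ∈ H → A ∈ H :=
    fun A h => (Subgroup.mul_mem_cancel_left H hS).mp h
  have eE : ∀ (k : R) (A : SpecialLinearGroup (Fin 2) R),
      (E12 k * A) 0 0 = A 0 0 + k * A 1 0 ∧ (E12 k * A) 0 1 = A 0 1 + k * A 1 1 ∧
      (E12 k * A) 1 0 = A 1 0 ∧ (E12 k * A) 1 1 = A 1 1 := by
    intro k A
    have h : ((E12 k * A : SpecialLinearGroup (Fin 2) R) : Matrix (Fin 2) (Fin 2) R) =
      !![1, k; 0, 1] * (A : Matrix (Fin 2) (Fin 2) R) := rfl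
    rw [h]
    simp [Matrix.mul_apply, Fin.sum_univ_two]
  have eS : ∀ (A : SpecialLinearGroup (Fin 2) R),
      (SS * A : SpecialLinearGroup (Fin 2) R) 0 0 = A 1 0 ∧ (SS * A : SpecialLinearGroup (Fin 2) R) 0 1 = A 1 1 ∧
      (SS * A : SpecialLinearGroup (Fin 2) R) 1 0 = - A 0 0 ∧ (SS * A : SpecialLinearGroup (Fin 2) R) 1 1 = - A 0 1 := by
    intro A
    have h : ((SS * A : SpecialLinearGroup (Fin 2) R) : Matrix (Fin 2) (Fin 2) R) =
      !![0, 1; -1, 0] * (A : Matrix (Fin 2) (Fin 2) R) := rfl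
    rw [h]
    simp [Matrix.mul_apply, Fin.sum_univ_two]
  -- lower left entry `-1`
  have c1 : ∀ A : SpecialLinearGroup (Fin 2) R, A 1 0 = -1 → A ∈ H := by
    intro A hA
    apply hEm (A 0 0)
    have : E12 (A 0 0) * A = SS * E12 (- A 1 1) := by
      have hd := hdet A
      rw [hA] at hd
      obtain ⟨e1, e2, e3, e4⟩ := eE (A 0 0) A
      obtain ⟨f1, f2, f3, f4⟩ := eS (E12 (- A 1 1))
      ext i j
      fin_cases i <;> fin_cases j
      · change (E12 (A 0 0) * A) 0 0 = (SS * E12 (- A 1 1) : SpecialLinearGroup (Fin 2) R) 0 0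
        rw [e1, f1, hA]; simp [E12]
      · change (E12 (A 0 0) * A) 0 1 = (SS * E12 (- A 1 1) : SpecialLinearGroup (Fin 2) R) 0 1
        rw [e2, f2]; simp [E12]; linear_combination hd
      · change (E12 (A 0 0) * A) 1 0 = (SS * E12 (- A 1 1) : SpecialLinearGroup (Fin 2) R) 1 0
        rw [e3, f3, hA]; simp [E12]
      · change (E12 (A 0 0) * A) 1 1 = (SS * E12 (- A 1 1) : SpecialLinearGroup (Fin 2) R) 1 1
        rw [e4, f4]; simp [E12]
    rw [this]
    exact H.mul_mem hS (hE _)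
  -- lower left entry `0`
  have c0 : ∀ A : SpecialLinearGroup (Fin 2) R, A 1 0 = 0 → A ∈ H := by
    intro A hA
    apply hSm
    apply hEm (-A 1 1)
    apply hSm
    apply c1
    obtain ⟨-, -, e3, -⟩ := eS (E12 (-A 1 1) * (SS * A))
    rw [e3, (eE _ _).1, (eS A).1, (eS A).2.2.1, hA]
    have hd := hdet A
    rw [hA] at hd
    linear_combination (-1 : R) * hd
  have main : ∀ n : ℕ, ∀ u v : ℤ, u ^ 2 - u * v + v ^ 2 = n →
      ∀ A : SpecialLinearGroup (Fin 2) R, A 1 0 = u + v * η → A ∈ H := by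
    intro n
    induction n using Nat.strong_induction_on with
    | _ n ih =>
    intro u v huv A hA
    rcases Nat.eq_zero_or_pos n with rfl | hn
    · have hv : v = 0 := by
        have : v ^ 2 = 0 := by
          push_cast at huv
          nlinarith [sq_nonneg (2 * u - v), sq_nonneg v]
        exact pow_eq_zero_iff (two_ne_zero) |>.mp this
      have hu : u = 0 := by
        rw [hv] at huv
        exact pow_eq_zero_iff (two_ne_zero) |>.mp (by simpa using huv : u ^ 2 = 0)
      apply c0
      rw [hA, hu, hv]; simp
    · obtain ⟨x, y, hxy⟩ := hspan (A 0 0)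
      obtain ⟨k, l, hkl⟩ := eis_div x y u v (by rw [huv]; exact_mod_cast hn)
      apply hEm (-((k : R) + l * η))
      apply hSm
      set p := x - (k * u - l * v)
      set q := y - (k * v + l * u - l * v)
      have hpos : 0 ≤ p ^ 2 - p * q + q ^ 2 := by nlinarith [sq_nonneg (2 * p - q), sq_nonneg q]
      refine ih (p ^ 2 - p * q + q ^ 2).toNat ?_ (-p) (-q) ?_ _ ?_
      · zify; rw [Int.toNat_of_nonneg hpos, ← huv]; exact hkl
      · rw [Int.toNat_of_nonneg hpos]; ring
      · rw [(eS _).2.2.1, (eE _ _).1, hxy, hA]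
        simp only [p, q]
        push_cast
        linear_combination (l * v : R) * hη
  obtain ⟨u, v, huv⟩ := hspan (A 1 0)
  have hpos : 0 ≤ u ^ 2 - u * v + v ^ 2 := by nlinarith [sq_nonneg (2 * u - v), sq_nonneg v]
  exact main (u ^ 2 - u * v + v ^ 2).toNat u v (Int.toNat_of_nonneg hpos).symm A huv

theorem fma2 (η : R) (hη : η ^ 2 + η + 1 = 0) :
    ((!![0, 1; -1, 0] : Matrix (Fin 2) (Fin 2) R) * (!![0, 1; -1, 0] : Matrix (Fin 2) (Fin 2) R)) = -(1 : Matrix (Fin 2) (Fin 2) R) := by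
  ext i j
  fin_cases i <;> fin_cases j <;> simp [Matrix.mul_apply, Fin.sum_univ_two] <;> grind

theorem fmb2 (η : R) (hη : η ^ 2 + η + 1 = 0) :
    ((!![0, η; 1 + η, 0] : Matrix (Fin 2) (Fin 2) R) * (!![0, η; 1 + η, 0] : Matrix (Fin 2) (Fin 2) R)) = -(1 : Matrix (Fin 2) (Fin 2) R) := by
  ext i j
  fin_cases i <;> fin_cases j <;> simp [Matrix.mul_apply, Fin.sum_univ_two] <;> grind

theorem fmc3 (η : R) (hη : η ^ 2 + η + 1 = 0) :
    (!![1, 1 + η; η, 0] : Matrix (Fin 2) (Fin 2) R) * ((!![1, 1 + η; η, 0] : Matrix (Fin 2) (Fin 2) R) * (!![1, 1 + η; η, 0] : Matrix (Fin 2) (Fin 2) R)) = -(1 : Matrix (Fin 2) (Fin 2) R) := by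
  ext i j
  fin_cases i <;> fin_cases j <;> simp [Matrix.mul_apply, Fin.sum_univ_two] <;> grind

theorem fmac3 (η : R) (hη : η ^ 2 + η + 1 = 0) :
    ((!![0, 1; -1, 0] : Matrix (Fin 2) (Fin 2) R) * (!![1, 1 + η; η, 0] : Matrix (Fin 2) (Fin 2) R)) * (((!![0, 1; -1, 0] : Matrix (Fin 2) (Fin 2) R) * (!![1, 1 + η; η, 0] : Matrix (Fin 2) (Fin 2) R)) * ((!![0, 1; -1, 0] : Matrix (Fin 2) (Fin 2) R) * (!![1, 1 + η; η, 0] : Matrix (Fin 2) (Fin 2) R))) = (1 : Matrix (Fin 2) (Fin 2) R) := by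
  ext i j
  fin_cases i <;> fin_cases j <;> simp [Matrix.mul_apply, Fin.sum_univ_two] <;> grind

theorem fmbc3 (η : R) (hη : η ^ 2 + η + 1 = 0) :
    ((!![0, η; 1 + η, 0] : Matrix (Fin 2) (Fin 2) R) * (!![1, 1 + η; η, 0] : Matrix (Fin 2) (Fin 2) R)) * (((!![0, η; 1 + η, 0] : Matrix (Fin 2) (Fin 2) R) * (!![1, 1 + η; η, 0] : Matrix (Fin 2) (Fin 2) R)) * ((!![0, η; 1 + η, 0] : Matrix (Fin 2) (Fin 2) R) * (!![1, 1 + η; η, 0] : Matrix (Fin 2) (Fin 2) R))) = (1 : Matrix (Fin 2) (Fin 2) R) := by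
  ext i j
  fin_cases i <;> fin_cases j <;> simp [Matrix.mul_apply, Fin.sum_univ_two] <;> grind

theorem fmab3 (η : R) (hη : η ^ 2 + η + 1 = 0) :
    ((!![0, 1; -1, 0] : Matrix (Fin 2) (Fin 2) R) * (!![0, η; 1 + η, 0] : Matrix (Fin 2) (Fin 2) R)) * (((!![0, 1; -1, 0] : Matrix (Fin 2) (Fin 2) R) * (!![0, η; 1 + η, 0] : Matrix (Fin 2) (Fin 2) R)) * ((!![0, 1; -1, 0] : Matrix (Fin 2) (Fin 2) R) * (!![0, η; 1 + η, 0] : Matrix (Fin 2) (Fin 2) R))) = -(1 : Matrix (Fin 2) (Fin 2) R) := by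
  ext i j
  fin_cases i <;> fin_cases j <;> simp [Matrix.mul_apply, Fin.sum_univ_two] <;> grind

theorem fe1 (η : R) (hη : η ^ 2 + η + 1 = 0) :
    (!![1, 1; 0, 1] : Matrix (Fin 2) (Fin 2) R) = -((!![0, 1; -1, 0] : Matrix (Fin 2) (Fin 2) R) * (!![0, η; 1 + η, 0] : Matrix (Fin 2) (Fin 2) R) * (!![1, 1 + η; η, 0] : Matrix (Fin 2) (Fin 2) R) * (!![0, η; 1 + η, 0] : Matrix (Fin 2) (Fin 2) R)) := by
  ext i j
  fin_cases i <;> fin_cases j <;> simp [Matrix.mul_apply, Fin.sum_univ_two] <;> grind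

theorem fe2 (η : R) (hη : η ^ 2 + η + 1 = 0) :
    (!![1, η; 0, 1] : Matrix (Fin 2) (Fin 2) R) = -((!![0, η; 1 + η, 0] : Matrix (Fin 2) (Fin 2) R) * (!![0, 1; -1, 0] : Matrix (Fin 2) (Fin 2) R) * (!![1, 1 + η; η, 0] : Matrix (Fin 2) (Fin 2) R) * (!![0, 1; -1, 0] : Matrix (Fin 2) (Fin 2) R)) := by
  ext i j
  fin_cases i <;> fin_cases j <;> simp [Matrix.mul_apply, Fin.sum_univ_two] <;> grind

theorem tri_exists (η : R) (hη : η ^ 2 + η + 1 = 0) (hspan : ∀ r : R, ∃ x y : ℤ, r = x + y * η) :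
    ∃ a b c : SpecialLinearGroup (Fin 2) R ⧸ Subgroup.center (SpecialLinearGroup (Fin 2) R),
      Tri a b c := by
  let π := QuotientGroup.mk' (Subgroup.center (SpecialLinearGroup (Fin 2) R))
  let b : SpecialLinearGroup (Fin 2) R := ⟨!![0, η; 1 + η, 0], by
    simp; linear_combination (-1 : R) * hη⟩
  let c : SpecialLinearGroup (Fin 2) R := ⟨!![1, 1 + η; η, 0], by
    simp; linear_combination (-1 : R) * hη⟩
  have hneg : ∀ A B : SpecialLinearGroup (Fin 2) R, A = B ∨ A = -B → π A = π B := by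
    rintro A B (rfl | rfl)
    · rfl
    · have : π (-1) = 1 := by
        exact (QuotientGroup.eq_one_iff _).mpr (Subgroup.mem_center_iff.mpr (by intro g; simp))
      rw [← neg_one_mul, map_mul, this, one_mul]
  refine ⟨π SS, π b, π c, ?_, ?_, ?_, ?_, ?_, ?_, ?_⟩
  · rw [← map_mul, ← map_one π]; apply hneg; right
    apply Subtype.ext
    exact fma2 η hη
  · rw [← map_mul, ← map_one π]; apply hneg; right
    apply Subtype.ext
    exact fmb2 η hη
  · rw [← map_pow, pow_three, ← map_one π]; apply hneg; right
    apply Subtype.ext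
    exact fmc3 η hη
  · rw [← map_mul, ← map_pow, pow_three, ← map_one π]; apply hneg; left
    apply Subtype.ext
    exact fmac3 η hη
  · rw [← map_mul, ← map_pow, pow_three, ← map_one π]; apply hneg; left
    apply Subtype.ext
    exact fmbc3 η hη
  · rw [← map_mul, ← map_pow, pow_three, ← map_one π]; apply hneg; right
    apply Subtype.ext
    exact fmab3 η hη
  · set K := Subgroup.closure {π SS, π b, π c}
    have ka : π SS ∈ K := Subgroup.subset_closure (by simp)
    have kb : π b ∈ K := Subgroup.subset_closure (by simp)
    have kc : π c ∈ K := Subgroup.subset_closure (by simp)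
    rw [eq_top_iff]
    intro v _
    obtain ⟨A, rfl⟩ := QuotientGroup.mk'_surjective _ v
    refine SL2_gen η hη hspan (K.comap π) ?_ ?_ ka A
    · have : π (E12 1) = π (SS * b * c * b) := by
        apply hneg; right
        exact Subtype.ext (fe1 η hη)
      rw [Subgroup.mem_comap, this, map_mul, map_mul, map_mul]
      exact K.mul_mem (K.mul_mem (K.mul_mem ka kb) kc) kb
    · have : π (E12 η) = π (b * SS * c * SS) := by
        apply hneg; right
        exact Subtype.ext (fe2 η hη)
      rw [Subgroup.mem_comap, this, map_mul, map_mul, map_mul]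
      exact K.mul_mem (K.mul_mem (K.mul_mem kb ka) kc) ka

end concrete

theorem eis_basis : ∃ η : NumberField.RingOfIntegers (CyclotomicField 3 ℚ), η ^ 2 + η + 1 = 0 ∧
    ∀ r : NumberField.RingOfIntegers (CyclotomicField 3 ℚ), ∃ x y : ℤ, r = x + y * η := by
  have : Fact (Nat.Prime 3) := ⟨by norm_num⟩
  have : NeZero ((3 : ℕ) : ℚ) := ⟨by norm_num⟩
  have hcyc : IsCyclotomicExtension {3} ℚ (CyclotomicField 3 ℚ) :=
    CyclotomicField.isCyclotomicExtension 3 ℚ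
  have hζ := IsCyclotomicExtension.zeta_spec 3 ℚ (CyclotomicField 3 ℚ)
  have h1 := IsCyclotomicExtension.Rat.Three.eta_sq hζ
  let η := hζ.toInteger
  have h1 : η ^ 2 = -η - 1 := h1
  refine ⟨η, by rw [h1]; ring, ?_⟩
  have hi : IsCyclotomicExtension {3 ^ 1} ℚ (CyclotomicField 3 ℚ) := by
    rw [pow_one]; exact hcyc
  have hζ' : IsPrimitiveRoot (IsCyclotomicExtension.zeta 3 ℚ (CyclotomicField 3 ℚ)) (3 ^ 1) := by
    rw [pow_one]; exact hζ
  let B := hζ'.integralPowerBasisOfPrimePow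
  have hgen : B.gen = η := hζ'.integralPowerBasisOfPrimePow_gen
  have hdim : B.dim = 2 := by
    rw [hζ'.integralPowerBasisOfPrimePow_dim]; decide
  intro r
  have := B.basis.sum_repr r
  simp only [PowerBasis.coe_basis, hgen] at this
  have h3 : ∑ i : Fin 2, (B.basis.repr r (Fin.cast hdim.symm i)) • η ^ (i : ℕ) = r := by
    conv_rhs => rw [← this]
    exact Fintype.sum_equiv (finCongr hdim.symm) _ _ (fun i => rfl)
  rw [Fin.sum_univ_two] at h3
  exact ⟨_, _, h3.symm.trans (by simp; rfl)⟩

end GS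

/-- Any two good subgroups of `Γ = PSL(2, ℤ[ω])` are conjugate; moreover every
good subgroup has index exactly `12` and abelianization `ℤ × ℤ/5ℤ` (it is the
fundamental group `Γ_s` of the sister of the figure-eight knot complement). -/
theorem good_subgroup_unique_up_to_conjugacy :
    (∀ Δ Δ' : Subgroup (PSL2 Eisenstein), GoodSubgroup Δ → GoodSubgroup Δ' →
      SubgroupConj (PSL2 Eisenstein) Δ Δ') ∧
    ∀ Δ : Subgroup (PSL2 Eisenstein), GoodSubgroup Δ →
      Δ.index = 12 ∧
        Nonempty (Abelianization Δ ≃* Multiplicative ℤ × Multiplicative (ZMod 5)) := by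
  obtain ⟨η, h1, h2⟩ := GS.eis_basis
  obtain ⟨a, b, c, t⟩ := GS.tri_exists η h1 h2
  exact ⟨fun Δ Δ' h h' => GS.core3 t Δ Δ' h h',
    fun Δ h => ⟨(GS.core2 t Δ h).1, (GS.core2 t Δ h).2.1⟩⟩
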